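/- If the Riemann hypothesis holds, then for every positive integer n one has (∑_{k ≤ δ(n)} 1/k − n²/2)² < 25·n³ + 10·n^{3/2} + 1. -/

import Mathlib

open scoped Real

/-- The Riemann hypothesis: every nontrivial zero of ζ (a zero with real part strictly
between 0 and 1) has real part 1/2. -/
def RH : Prop := ∀ s : ℂ, riemannZeta s = 0 → 0 < s.re → s.re < 1 → s.re = 1 / 2

/-- η(j) = p if j = p^k is a power of a prime p (k ≥ 1), and η(j) = 1 otherwise. -/
noncomputable def eta (j : ℕ) : ℕ := if IsPrimePow j then j.minFac else 1

/-- δ(n) = ∏_{m < n} ∏_{j ≤ m} η(j). -/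
noncomputable def delta (n : ℕ) : ℕ :=
  ∏ m ∈ Finset.range n, ∏ j ∈ Finset.Icc 1 m, eta j

/-!
Up to a bounded error, `∑ k ≤ δ(n), 1 / k` is `log δ(n) = ∑ j < n, (n - j) Λ(j)`, so the theorem is
an explicit form of the estimate `log δ(n) = n² / 2 + O(n^(3/2))`.

Under the Riemann hypothesis `ξ'/ξ` has nonnegative real part to the right of the critical line.
This is obtained without the Hadamard product: by the functional equation `|ξ(s)| = |ξ(s + 2a)|`
on the line `Re s = 1/2 - a`, hence `|ξ(s)| ≤ |ξ(s + 2a)|` to the right of it by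
Phragmén–Lindelöf, and `a → 0` makes `|ξ|` nondecreasing along horizontal rays. The archimedean
part of `ξ'/ξ`, an increment of the digamma function, has nonnegative real part as well. Such a
function is controlled by its value at `2`: the disc coordinate `z = (s - 2) / (s + 1)` turns it
into an average of Herglotz kernels of that total mass. The kernel at `s = k + 2`, divided by
`(k + 2) (k + 3)`, is the `k`-th moment on `[0, 1]` of a weight dominated by `2 √x + 3 x + x²`, and
the difference of the two functions is, up to explicit terms, in the same sense the `k`-th moment
of `∑ Λ(n) max(x - n x², 0)`. Testing against nonnegative polynomials, which are dense, turns the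
comparison of moments into a pointwise bound, and at `x = 1 / n` the sum is `log δ(n) / n²`.
-/

open Filter MeasureTheory Metric Polynomial Set Topology
open scoped ComplexConjugate

section Gamma

open Complex

theorem betaIntegral_ofReal (x h : ℝ) :
    betaIntegral x h = ↑(∫ t in (0 : ℝ)..1, t ^ (x - 1) * (1 - t) ^ (h - 1)) := by
  rw [betaIntegral, ← intervalIntegral.integral_ofReal]
  refine intervalIntegral.integral_congr fun t ht ↦ ?_
  rw [uIcc_of_le zero_le_one] at ht
  simp [ofReal_cpow ht.1, ofReal_cpow (sub_nonneg.2 ht.2)]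

theorem norm_betaIntegral_le_of_le_re {x h : ℝ} (hx : 0 < x) (hh : 0 < h) {z : ℂ}
    (hz : x ≤ z.re) : ‖betaIntegral z h‖ ≤ ‖betaIntegral x h‖ := by
  have norm_integrand (w : ℂ) {t : ℝ} (ht : t ∈ Ioo 0 1) :
      ‖(t : ℂ) ^ (w - 1) * (1 - t : ℂ) ^ ((h : ℂ) - 1)‖ =
        t ^ (w.re - 1) * (1 - t) ^ (h - 1) := by
    rw [norm_mul, ← ofReal_one, ← ofReal_sub 1 t, norm_cpow_eq_rpow_re_of_pos ht.1,
      norm_cpow_eq_rpow_re_of_pos (sub_pos.2 ht.2)]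
    simp
  have integrable := (betaIntegral_convergent (u := x) (v := h) (by simpa) (by simpa)).norm
  calc
    ‖betaIntegral z h‖
      ≤ ∫ t in (0 : ℝ)..1, ‖(t : ℂ) ^ ((x : ℂ) - 1) * (1 - t : ℂ) ^ ((h : ℂ) - 1)‖ := by
        refine intervalIntegral.norm_integral_le_of_norm_le zero_le_one ?_ integrable
        filter_upwards [Measure.ae_ne volume 1] with t ht1 ht0
        have ht : t ∈ Ioo 0 1 := ⟨ht0.1, ht0.2.lt_of_ne ht1⟩
        rw [norm_integrand z ht, norm_integrand x ht, ofReal_re]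
        exact mul_le_mul_of_nonneg_right
          (Real.rpow_le_rpow_of_exponent_ge ht.1 ht.2.le (by linarith))
          (Real.rpow_nonneg (sub_nonneg.2 ht.2.le) _)
    _ = ∫ t in (0 : ℝ)..1, t ^ (x - 1) * (1 - t) ^ (h - 1) := by
        refine intervalIntegral.integral_congr_Ioo_of_le zero_le_one fun t ht ↦ ?_
        simpa using norm_integrand x ht
    _ ≤ ‖betaIntegral x h‖ := by
        rw [betaIntegral_ofReal, norm_real]
        exact le_abs_self _

theorem norm_Gamma_ofReal {x : ℝ} (hx : 0 < x) : ‖Gamma x‖ = Real.Gamma x := by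
  rw [Gamma_ofReal, norm_real, Real.norm_of_nonneg (Real.Gamma_pos_of_pos hx).le]

theorem norm_Gamma_mul_Gamma_add_le {x h : ℝ} (hx : 0 < x) (hh : 0 < h) {z : ℂ}
    (hz : x ≤ z.re) : ‖Gamma z‖ * Real.Gamma (x + h) ≤ Real.Gamma x * ‖Gamma (z + h)‖ := by
  have beta_z : ‖Gamma z‖ * Real.Gamma h = ‖Gamma (z + h)‖ * ‖betaIntegral z h‖ := by
    rw [← norm_mul, ← Gamma_mul_Gamma_eq_betaIntegral (hx.trans_le hz) (by simpa), norm_mul,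
      norm_Gamma_ofReal hh]
  have beta_x : Real.Gamma x * Real.Gamma h = Real.Gamma (x + h) * ‖betaIntegral x h‖ := by
    rw [← norm_Gamma_ofReal hx, ← norm_Gamma_ofReal hh, ← norm_Gamma_ofReal (add_pos hx hh),
      ofReal_add, ← norm_mul, ← norm_mul, Gamma_mul_Gamma_eq_betaIntegral (by simpa) (by simpa)]
  refine le_of_mul_le_mul_right ?_ (Real.Gamma_pos_of_pos hh)
  calc
    ‖Gamma z‖ * Real.Gamma (x + h) * Real.Gamma h
      = Real.Gamma (x + h) * ‖Gamma (z + h)‖ * ‖betaIntegral z h‖ := by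
        linear_combination Real.Gamma (x + h) * beta_z
    _ ≤ Real.Gamma (x + h) * ‖Gamma (z + h)‖ * ‖betaIntegral x h‖ := by
        have := Real.Gamma_pos_of_pos (add_pos hx hh)
        gcongr
        exact norm_betaIntegral_le_of_le_re hx hh hz
    _ = Real.Gamma x * ‖Gamma (z + h)‖ * Real.Gamma h := by
        linear_combination -‖Gamma (z + h)‖ * beta_x

theorem hasDerivAt_norm_sq_add_ofReal {f : ℂ → ℂ} {z : ℂ} (hf : DifferentiableAt ℂ f z) :
    HasDerivAt (fun t : ℝ ↦ ‖f (z + t)‖ ^ 2) (2 * (deriv f z * conj (f z)).re) 0 := by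
  have shift : HasDerivAt (fun t : ℝ ↦ z + t) 1 0 :=
    ((hasDerivAt_id (0 : ℝ)).ofReal_comp).const_add z
  have hf0 : HasDerivAt f (deriv f z) (z + (0 : ℝ)) := by simpa using hf.hasDerivAt
  simpa [Complex.inner] using (hf0.comp (0 : ℝ) shift).norm_sq

theorem re_logDeriv_le_re_logDeriv {f g : ℂ → ℂ} {z w : ℂ} (hf : DifferentiableAt ℂ f z)
    (hg : DifferentiableAt ℂ g w) (hfz : f z ≠ 0) (hgw : g w ≠ 0)
    (h : ∀ᶠ t : ℝ in 𝓝[>] 0, ‖f z‖ * ‖g (w + t)‖ ≤ ‖g w‖ * ‖f (z + t)‖) :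
    (logDeriv g w).re ≤ (logDeriv f z).re := by
  have re_logDeriv (k : ℂ → ℂ) (u : ℂ) :
      (logDeriv k u).re = (deriv k u * conj (k u)).re / ‖k u‖ ^ 2 := by
    rw [logDeriv_apply, div_eq_mul_inv, inv_def, ← mul_assoc, re_mul_ofReal,
      normSq_eq_norm_sq, div_eq_mul_inv]
  have deriv_gap := ((hasDerivAt_norm_sq_add_ofReal hf).const_mul (‖g w‖ ^ 2)).sub
    ((hasDerivAt_norm_sq_add_ofReal hg).const_mul (‖f z‖ ^ 2))
  have gap_nonneg : 0 ≤ ‖g w‖ ^ 2 * (2 * (deriv f z * conj (f z)).re) -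
      ‖f z‖ ^ 2 * (2 * (deriv g w * conj (g w)).re) := by
    refine ge_of_tendsto ((hasDerivWithinAt_iff_tendsto_slope' self_notMem_Ioi).1
      (deriv_gap.hasDerivWithinAt (s := Ioi 0))) ?_
    filter_upwards [h, self_mem_nhdsWithin] with t hle (ht : 0 < t)
    have hle_sq := pow_le_pow_left₀ (by positivity) hle 2
    rw [slope_def_field]
    simp only [Pi.sub_apply, ofReal_zero, add_zero, sub_zero]
    exact div_nonneg (by linarith) ht.le
  rw [re_logDeriv, re_logDeriv, div_le_div_iff₀ (by positivity) (by positivity)]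
  linarith

theorem re_digamma_le_re_digamma {x : ℝ} (hx : 0 < x) {z : ℂ} (hz : x ≤ z.re) :
    (digamma x).re ≤ (digamma z).re := by
  have differentiableAt {w : ℂ} (hw : 0 < w.re) : DifferentiableAt ℂ Gamma w :=
    differentiableAt_Gamma w fun m hm ↦ by
      rw [hm, neg_re, natCast_re] at hw
      linarith [(m.cast_nonneg : (0 : ℝ) ≤ m)]
  have hz0 : 0 < z.re := hx.trans_le hz
  have hx0 : 0 < (x : ℂ).re := by simpa
  refine re_logDeriv_le_re_logDeriv (differentiableAt hz0) (differentiableAt hx0)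
    (Gamma_ne_zero_of_re_pos hz0) (Gamma_ne_zero_of_re_pos hx0) ?_
  filter_upwards [self_mem_nhdsWithin] with t (ht : 0 < t)
  rw [← ofReal_add, norm_Gamma_ofReal hx, norm_Gamma_ofReal (add_pos hx ht)]
  exact norm_Gamma_mul_Gamma_add_le hx ht hz

theorem rpow_mul_norm_Gamma_le {x a : ℝ} (ha : 0 < a) (ha1 : a < 1) (hx : 1 - a < x) {z : ℂ}
    (hz : x ≤ z.re) : (x + a - 1) ^ a * ‖Gamma z‖ ≤ ‖Gamma (z + a)‖ := by
  have hx0 : 0 < x := by linarith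
  have hy : 0 < x + a - 1 := by linarith
  have Gamma_pred_pos := Real.Gamma_pos_of_pos hy
  have Gamma_pos := Real.Gamma_pos_of_pos (add_pos hx0 ha)
  have Gamma_x_pos := Real.Gamma_pos_of_pos hx0
  have recurrence : Real.Gamma (x + a) = (x + a - 1) * Real.Gamma (x + a - 1) := by
    simpa using Real.Gamma_add_one hy.ne'
  have log_convex :
      Real.Gamma x ≤ Real.Gamma (x + a) ^ (1 - a) * Real.Gamma (x + a - 1) ^ a := by
    have := Real.Gamma_mul_add_mul_le_rpow_Gamma_mul_rpow_Gamma (add_pos hx0 ha) hy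
      (sub_pos.2 ha1) ha (sub_add_cancel 1 a)
    rwa [show (1 - a) * (x + a) + a * (x + a - 1) = x by ring] at this
  have real_shift : (x + a - 1) ^ a * Real.Gamma x ≤ Real.Gamma (x + a) := by
    calc
      (x + a - 1) ^ a * Real.Gamma x
        ≤ (x + a - 1) ^ a * (Real.Gamma (x + a) ^ (1 - a) * Real.Gamma (x + a - 1) ^ a) := by
          gcongr
      _ = Real.Gamma (x + a) ^ (1 - a) * Real.Gamma (x + a) ^ a := by
          rw [mul_left_comm, ← Real.mul_rpow hy.le Gamma_pred_pos.le, ← recurrence]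
      _ = Real.Gamma (x + a) := by
          rw [← Real.rpow_add Gamma_pos, sub_add_cancel, Real.rpow_one]
  refine le_of_mul_le_mul_left ?_ Gamma_x_pos
  calc
    Real.Gamma x * ((x + a - 1) ^ a * ‖Gamma z‖)
      = ‖Gamma z‖ * ((x + a - 1) ^ a * Real.Gamma x) := by ring
    _ ≤ ‖Gamma z‖ * Real.Gamma (x + a) := by gcongr
    _ ≤ Real.Gamma x * ‖Gamma (z + a)‖ := norm_Gamma_mul_Gamma_add_le hx0 ha hz

theorem norm_sin_le_exp_abs_im (z : ℂ) : ‖sin z‖ ≤ Real.exp |z.im| := by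
  have norm_exp_neg : ‖exp (-z * I)‖ ≤ Real.exp |z.im| := by
    simpa [norm_exp] using le_abs_self z.im
  have norm_exp_pos : ‖exp (z * I)‖ ≤ Real.exp |z.im| := by
    simpa [norm_exp] using neg_le_abs z.im
  rw [sin, norm_div, norm_mul, norm_I, mul_one, norm_ofNat]
  linarith [norm_sub_le (exp (-z * I)) (exp (z * I))]

theorem exp_neg_pi_mul_abs_im_le_norm_Gamma_sq {z : ℂ} (hz : z.re = 1 / 2) :
    Real.exp (-π * |z.im|) ≤ ‖Gamma z‖ ^ 2 := by
  have one_sub_eq : 1 - z = conj z := by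
    apply Complex.ext
    · norm_num [hz]
    · simp
  have reflection : ‖Gamma z‖ ^ 2 = π / ‖sin (π * z)‖ := by
    have := congrArg norm (Gamma_mul_Gamma_one_sub z)
    rwa [one_sub_eq, Gamma_conj, norm_mul, norm_conj, ← sq, norm_div, norm_real,
      Real.norm_of_nonneg Real.pi_pos.le] at this
  have Gamma_sq_pos : 0 < ‖Gamma z‖ ^ 2 := by
    have := Gamma_ne_zero_of_re_pos (s := z) (by norm_num [hz])
    positivity
  have sin_pos : 0 < ‖sin (π * z)‖ := by
    rw [reflection] at Gamma_sq_pos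
    exact (div_pos_iff_of_pos_left Real.pi_pos).1 Gamma_sq_pos
  have sin_le : ‖sin (π * z)‖ ≤ Real.exp (π * |z.im|) := by
    simpa [abs_mul, abs_of_pos Real.pi_pos] using norm_sin_le_exp_abs_im (π * z)
  rw [reflection, neg_mul, Real.exp_neg, ← one_div]
  gcongr
  linarith [Real.pi_gt_three]

theorem norm_Gammaℝ (s : ℂ) : ‖Gammaℝ s‖ = π ^ (-s.re / 2) * ‖Gamma (s / 2)‖ := by
  rw [Gammaℝ_def, norm_mul, norm_cpow_eq_rpow_re_of_pos Real.pi_pos]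
  simp

theorem exists_exp_le_norm_Gammaℝ {σ : ℝ} (hσ : 1 < σ) :
    ∃ C, ∀ s : ℂ, s.re = σ → Real.exp (-(C * (1 + |s.im|))) ≤ ‖Gammaℝ s‖ := by
  set h := (σ - 1) / 2 with hh
  have h_pos : 0 < h := by linarith
  have Gamma_half_pos := Real.Gamma_pos_of_pos one_half_pos
  have Gamma_half_add_pos := Real.Gamma_pos_of_pos (add_pos one_half_pos h_pos)
  set K := π ^ (-σ / 2) * (Real.Gamma (1 / 2 + h) / Real.Gamma (1 / 2)) with hK
  have K_pos : 0 < K := by positivity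
  refine ⟨|Real.log K| + 1, fun s hs ↦ ?_⟩
  have half_re : (s / 2 - h).re = 1 / 2 := by
    simp [hs, hh]
    ring
  have Gamma_half_line : Real.exp (-|s.im|) ≤ ‖Gamma (s / 2 - h)‖ := by
    refine le_of_sq_le_sq (le_trans ?_ (exp_neg_pi_mul_abs_im_le_norm_Gamma_sq half_re))
      (norm_nonneg _)
    rw [← Real.exp_nat_mul, Real.exp_le_exp]
    have : |(s / 2 - h).im| = |s.im| / 2 := by simp [abs_div]
    rw [this]
    nlinarith [Real.pi_lt_four, abs_nonneg s.im]
  have Gamma_shift : ‖Gamma (s / 2 - h)‖ * Real.Gamma (1 / 2 + h) ≤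
      Real.Gamma (1 / 2) * ‖Gamma (s / 2)‖ := by
    simpa using norm_Gamma_mul_Gamma_add_le one_half_pos h_pos half_re.ge
  calc
    Real.exp (-((|Real.log K| + 1) * (1 + |s.im|)))
      ≤ Real.exp (Real.log K + -|s.im|) := by
        rw [Real.exp_le_exp]
        nlinarith [neg_abs_le (Real.log K), abs_nonneg s.im, abs_nonneg (Real.log K)]
    _ = π ^ (-σ / 2) * (Real.exp (-|s.im|) * Real.Gamma (1 / 2 + h) / Real.Gamma (1 / 2)) := by
        rw [Real.exp_add, Real.exp_log K_pos, hK]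
        ring
    _ ≤ π ^ (-σ / 2) * ‖Gamma (s / 2)‖ := by
        gcongr
        rw [div_le_iff₀' Gamma_half_pos]
        exact (mul_le_mul_of_nonneg_right Gamma_half_line Gamma_half_add_pos.le).trans Gamma_shift
    _ = ‖Gammaℝ s‖ := by rw [norm_Gammaℝ, hs]

theorem Gammaℝ_conj (s : ℂ) : Gammaℝ (conj s) = conj (Gammaℝ s) := by
  have pi_arg : (π : ℂ).arg ≠ π := by
    rw [arg_ofReal_of_nonneg Real.pi_pos.le]
    exact Real.pi_pos.ne
  have conj_half : conj (-s / 2) = -conj s / 2 := by simp [conj_ofNat]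
  rw [Gammaℝ_def, Gammaℝ_def, map_mul, ← Gamma_conj, map_div₀, conj_ofNat, ← conj_half,
    cpow_conj _ _ pi_arg, conj_ofReal]

end Gamma

section Growth

open Complex

theorem exists_eq_mul_exp_of_ne_zero {f : ℂ → ℂ} {c : ℂ} {R : ℝ} (hR : 0 < R)
    (hf : DifferentiableOn ℂ f (ball c R)) (hne : ∀ z ∈ ball c R, f z ≠ 0) :
    ∃ g : ℂ → ℂ, DifferentiableOn ℂ g (ball c R) ∧ g c = 0 ∧
      ∀ z ∈ ball c R, f z = f c * exp (g z) := by
  have logDeriv_diff : DifferentiableOn ℂ (logDeriv f) (ball c R) :=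
    (hf.deriv isOpen_ball).div hf hne
  obtain ⟨g, g_center, hg⟩ := logDeriv_diff.isExactOn_ball.with_val_at c 0
  have g_diff : DifferentiableOn ℂ g (ball c R) :=
    fun z hz ↦ (hg z hz).differentiableAt.differentiableWithinAt
  have logDeriv_eq : EqOn (logDeriv f) (logDeriv fun z ↦ exp (g z)) (ball c R) := fun z hz ↦ by
    rw [logDeriv_apply (fun z ↦ exp (g z)), (hg z hz).cexp.deriv,
      mul_div_cancel_left₀ _ (exp_ne_zero _)]
  obtain ⟨k, -, hk⟩ := (logDeriv_eqOn_iff hf g_diff.cexp isOpen_ball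
    (convex_ball c R).isPreconnected (fun z _ ↦ exp_ne_zero _) hne).1 logDeriv_eq
  have hk' (z : ℂ) (hz : z ∈ ball c R) : f z = k * exp (g z) := hk hz
  refine ⟨g, g_diff, g_center, fun z hz ↦ ?_⟩
  rw [hk' z hz, hk' c (mem_ball_self hR), g_center, exp_zero, mul_one]

theorem norm_mul_exp_le_norm_of_ne_zero {f : ℂ → ℂ} {c z : ℂ} {R M : ℝ} (hM : 0 < M)
    (hf : DifferentiableOn ℂ f (ball c R)) (hne : ∀ z ∈ ball c R, f z ≠ 0)
    (hle : ∀ z ∈ ball c R, ‖f z‖ ≤ ‖f c‖ * Real.exp M) (hz : z ∈ ball c R) :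
    ‖f c‖ * Real.exp (-(2 * M * dist z c / (R - dist z c))) ≤ ‖f z‖ := by
  have hR : 0 < R := dist_nonneg.trans_lt hz
  obtain ⟨g, g_diff, g_center, hg⟩ := exists_eq_mul_exp_of_ne_zero hR hf hne
  have norm_eq (w : ℂ) (hw : w ∈ ball c R) : ‖f w‖ = ‖f c‖ * Real.exp (g w).re := by
    rw [hg w hw, norm_mul, norm_exp]
  have center_pos : 0 < ‖f c‖ := norm_pos_iff.2 (hne c (mem_ball_self hR))
  have shift_mem {w : ℂ} (hw : w ∈ ball 0 R) : c + w ∈ ball c R := by simpa using hw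
  have re_le : MapsTo (fun w ↦ g (c + w)) (ball 0 R) {w | w.re ≤ M} := fun w hw ↦ by
    have := norm_eq _ (shift_mem hw) ▸ hle _ (shift_mem hw)
    exact Real.exp_le_exp.1 (le_of_mul_le_mul_left this center_pos)
  have norm_le : ‖g z‖ ≤ 2 * M * dist z c / (R - dist z c) := by
    have shift_diff : DifferentiableOn ℂ (fun w ↦ g (c + w)) (ball 0 R) :=
      g_diff.comp (by fun_prop) fun _ ↦ shift_mem
    simpa [dist_eq] using borelCaratheodory_zero (z := z - c) hM shift_diff re_le hR
      (by simpa [dist_eq] using hz) (by simpa)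
  rw [norm_eq z hz]
  gcongr
  linarith [(abs_le.1 (abs_re_le_norm (g z))).1]

theorem re_mem_Ioo_of_mem_ball {c z : ℂ} {R : ℝ} (hz : z ∈ ball c R) :
    z.re ∈ Ioo (c.re - R) (c.re + R) := by
  rw [mem_ball, dist_eq] at hz
  have := abs_lt.1 ((abs_re_le_norm (z - c)).trans_lt hz)
  rw [sub_re] at this
  constructor <;> linarith

theorem one_add_abs_im_le_of_mem_ball {c z : ℂ} {R : ℝ} (hz : z ∈ ball c R) :
    1 + |z.im| ≤ (1 + R) * (1 + |c.im|) := by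
  have hR : 0 < R := dist_nonneg.trans_lt hz
  rw [mem_ball, dist_eq] at hz
  have im_close : |z.im - c.im| ≤ R := (abs_im_le_norm (z - c)).trans hz.le
  nlinarith [abs_sub_abs_le_abs_sub z.im c.im, abs_nonneg c.im]

theorem exp_le_norm_of_ne_zero_of_mem_ball {f : ℂ → ℂ} {c z : ℂ} {R C D : ℝ}
    (hf : DifferentiableOn ℂ f (ball c R)) (hne : ∀ w ∈ ball c R, f w ≠ 0)
    (hle : ∀ w ∈ ball c R, ‖f w‖ ≤ Real.exp (D * (1 + |w.im|)))
    (hge : Real.exp (-(C * (1 + |c.im|))) ≤ ‖f c‖) (hz : z ∈ ball c R) :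
    Real.exp (-((C + 2 * (|D| * (1 + R) + |C| + 1) * dist z c / (R - dist z c)) *
      (1 + |c.im|))) ≤ ‖f z‖ := by
  have R_pos : 0 < R := dist_nonneg.trans_lt hz
  set M := |D| * (1 + R) + |C| + 1 with hM
  set τ := 1 + |c.im|
  have τ_pos : 0 < τ := by positivity
  have upper (w : ℂ) (hw : w ∈ ball c R) : ‖f w‖ ≤ ‖f c‖ * Real.exp (M * τ) :=
    calc
      ‖f w‖ ≤ Real.exp (D * (1 + |w.im|)) := hle w hw
      _ ≤ Real.exp (-(C * τ) + M * τ) := by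
        rw [Real.exp_le_exp, hM]
        have : D * (1 + |w.im|) ≤ |D| * ((1 + R) * τ) := by
          gcongr
          · exact le_abs_self D
          · exact one_add_abs_im_le_of_mem_ball hw
        nlinarith [le_abs_self C]
      _ = Real.exp (-(C * τ)) * Real.exp (M * τ) := Real.exp_add _ _
      _ ≤ ‖f c‖ * Real.exp (M * τ) := by gcongr
  calc
    Real.exp (-((C + 2 * M * dist z c / (R - dist z c)) * τ))
      = Real.exp (-(C * τ)) * Real.exp (-(2 * (M * τ) * dist z c / (R - dist z c))) := by
        rw [← Real.exp_add]
        ring_nf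
    _ ≤ ‖f c‖ * Real.exp (-(2 * (M * τ) * dist z c / (R - dist z c))) := by gcongr
    _ ≤ ‖f z‖ := norm_mul_exp_le_norm_of_ne_zero (by positivity) hf hne upper hz

theorem exists_exp_le_norm_of_ne_zero {f : ℂ → ℂ} {σ b ε : ℝ} (hε : 0 < ε)
    (hf : DifferentiableOn ℂ f (re ⁻¹' Ioo σ (2 * b - σ)))
    (hne : ∀ s, s.re ∈ Ioo σ (2 * b - σ) → f s ≠ 0)
    (hle : ∃ D, ∀ s, s.re ∈ Ioo σ (2 * b - σ) → ‖f s‖ ≤ Real.exp (D * (1 + |s.im|)))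
    (hge : ∃ C, ∀ s, s.re = b → Real.exp (-(C * (1 + |s.im|))) ≤ ‖f s‖) :
    ∃ K, ∀ s, s.re ∈ Icc (σ + ε) b → Real.exp (-(K * (1 + |s.im|))) ≤ ‖f s‖ := by
  obtain ⟨D, hD⟩ := hle
  obtain ⟨C, hC⟩ := hge
  set R := b - σ with hR
  refine ⟨C + 2 * (|D| * (1 + R) + |C| + 1) * R / ε, fun s hs ↦ ?_⟩
  have R_pos : 0 < R := by linarith [hs.1, hs.2, hR]
  set c : ℂ := ⟨b, s.im⟩ with hc
  have dist_center : dist s c = b - s.re := by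
    rw [Complex.dist_of_im_eq (by simp [hc]), Real.dist_eq, abs_sub_comm]
    exact abs_of_nonneg (by linarith [hs.2])
  have re_mem (z : ℂ) (hz : z ∈ ball c R) : z.re ∈ Ioo σ (2 * b - σ) := by
    convert re_mem_Ioo_of_mem_ball hz using 2 <;> simp only [hc, hR] <;> ring
  have s_mem : s ∈ ball c R := by
    rw [mem_ball, dist_center]
    linarith [hs.1]
  refine le_trans ?_ (exp_le_norm_of_ne_zero_of_mem_ball (hf.mono re_mem)
    (fun z hz ↦ hne z (re_mem z hz)) (fun z hz ↦ hD z (re_mem z hz)) (hC c rfl) s_mem)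
  rw [dist_center]
  gcongr <;> linarith [hs.1, hs.2]

theorem isBigO_exp_mul_abs_im {c : ℝ} (hc : 0 < c) (S : Set ℂ) {f : ℂ → ℂ} {K : ℝ}
    (hf : ∀ s ∈ S, ‖f s‖ ≤ Real.exp (K * (1 + |s.im|))) :
    ∃ B, f =O[comap (_root_.abs ∘ im) atTop ⊓ 𝓟 S]
      fun z ↦ Real.exp (B * Real.exp (c * |z.im|)) := by
  refine ⟨|K| * (1 + 1 / c), .of_bound 1 (eventually_inf_principal.2 (.of_forall fun s hs ↦ ?_))⟩
  rw [one_mul, Real.norm_of_nonneg (Real.exp_pos _).le]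
  refine (hf s hs).trans (Real.exp_le_exp.2 ?_)
  have linear_le : 1 + |s.im| ≤ (1 + 1 / c) * Real.exp (c * |s.im|) := by
    calc
      1 + |s.im| ≤ (1 + 1 / c) * (c * |s.im| + 1) := by
        have : (1 + 1 / c) * (c * |s.im| + 1) = 1 + |s.im| + (c * |s.im| + 1 / c) := by
          field_simp
          ring
        rw [this]
        exact le_add_of_nonneg_right (by positivity)
      _ ≤ (1 + 1 / c) * Real.exp (c * |s.im|) := by
        gcongr
        exact Real.add_one_le_exp _
  rw [mul_assoc]
  gcongr
  exact le_abs_self K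

theorem norm_le_norm_of_vertical_strip {f g : ℂ → ℂ} {a b : ℝ}
    (hf : DiffContOnCl ℂ f (re ⁻¹' Ioo a b)) (hg : DiffContOnCl ℂ g (re ⁻¹' Ioo a b))
    (hf_le : ∃ C, ∀ s, s.re ∈ Icc a b → ‖f s‖ ≤ Real.exp (C * (1 + |s.im|)))
    (hg_ge : ∃ K, ∀ s, s.re ∈ Icc a b → Real.exp (-(K * (1 + |s.im|))) ≤ ‖g s‖)
    (hle_a : ∀ s, s.re = a → ‖f s‖ ≤ ‖g s‖) (hle_b : ∀ s, s.re = b → ‖f s‖ ≤ ‖g s‖)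
    {s : ℂ} (hs : s.re ∈ Icc a b) : ‖f s‖ ≤ ‖g s‖ := by
  obtain ⟨C, hC⟩ := hf_le
  obtain ⟨K, hK⟩ := hg_ge
  obtain rfl | hab := (hs.1.trans hs.2).eq_or_lt
  · exact hle_a s (le_antisymm hs.2 hs.1)
  have g_pos (z : ℂ) (hz : z.re ∈ Icc a b) : 0 < ‖g z‖ := (Real.exp_pos _).trans_le (hK z hz)
  have closure_strip : closure (re ⁻¹' Ioo a b) = re ⁻¹' Icc a b := by
    rw [closure_preimage_re, closure_Ioo hab.ne]
  set q : ℂ → ℂ := fun z ↦ (g z)⁻¹ • f z with hq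
  have q_diff : DiffContOnCl ℂ q (re ⁻¹' Ioo a b) :=
    (hg.inv fun z hz ↦ norm_pos_iff.1 (g_pos z (closure_strip.subset hz))).smul hf
  have q_norm (z : ℂ) : ‖q z‖ = ‖f z‖ / ‖g z‖ := by
    rw [hq, norm_smul, norm_inv, inv_mul_eq_div]
  have q_growth (z : ℂ) (hz : z ∈ re ⁻¹' Ioo a b) :
      ‖q z‖ ≤ Real.exp ((C + K) * (1 + |z.im|)) := by
    have hz' : z.re ∈ Icc a b := Ioo_subset_Icc_self hz
    rw [q_norm, div_le_iff₀ (g_pos z hz')]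
    calc
      ‖f z‖ ≤ Real.exp (C * (1 + |z.im|)) := hC z hz'
      _ = Real.exp ((C + K) * (1 + |z.im|)) * Real.exp (-(K * (1 + |z.im|))) := by
        rw [← Real.exp_add]
        ring_nf
      _ ≤ Real.exp ((C + K) * (1 + |z.im|)) * ‖g z‖ := by
        gcongr
        exact hK z hz'
  have q_le_one {z : ℂ} (hz : ‖f z‖ ≤ ‖g z‖) : ‖q z‖ ≤ 1 := by
    rw [q_norm]
    exact div_le_one_of_le₀ hz (norm_nonneg _)
  have width_pos : 0 < π / (b - a) := div_pos Real.pi_pos (sub_pos.2 hab)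
  have q_le : ‖q s‖ ≤ 1 :=
    PhragmenLindelof.vertical_strip q_diff
      ⟨_, half_lt_self width_pos, isBigO_exp_mul_abs_im (half_pos width_pos) _ q_growth⟩
      (fun z hz ↦ q_le_one (hle_a z hz)) (fun z hz ↦ q_le_one (hle_b z hz)) hs.1 hs.2
  rwa [q_norm, div_le_one (g_pos s hs)] at q_le

end Growth

section Xi

open Complex

theorem exists_norm_mellin_le {E : Type*} [NormedAddCommGroup E] [NormedSpace ℂ E] {f : ℝ → E}
    {a b : ℝ} (ha : MellinConvergent f a) (hb : MellinConvergent f b) :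
    ∃ C, ∀ s : ℂ, s.re ∈ Icc a b → ‖mellin f s‖ ≤ C := by
  have norm_kernel (w : ℂ) {t : ℝ} (ht : 0 < t) :
      ‖(t : ℂ) ^ (w - 1) • f t‖ = t ^ (w.re - 1) * ‖f t‖ := by
    simp [norm_smul, norm_cpow_eq_rpow_re_of_pos ht]
  refine ⟨∫ t in Ioi (0 : ℝ), (‖(t : ℂ) ^ ((a : ℂ) - 1) • f t‖ +
    ‖(t : ℂ) ^ ((b : ℂ) - 1) • f t‖), fun s hs ↦ ?_⟩
  refine norm_integral_le_of_norm_le (ha.norm.add hb.norm) ?_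
  filter_upwards [ae_restrict_mem measurableSet_Ioi] with t (ht : 0 < t)
  rw [norm_kernel s ht, norm_kernel a ht, norm_kernel b ht, ofReal_re, ofReal_re, ← add_mul]
  gcongr
  obtain h | h := le_total t 1
  · exact (Real.rpow_le_rpow_of_exponent_ge ht h (by linarith [hs.1])).trans
      (le_add_of_nonneg_right (by positivity))
  · exact (Real.rpow_le_rpow_of_exponent_le h (by linarith [hs.2])).trans
      (le_add_of_nonneg_left (by positivity))

theorem exists_norm_completedRiemannZeta₀_le (a b : ℝ) :
    ∃ C, ∀ s : ℂ, s.re ∈ Icc a b → ‖completedRiemannZeta₀ s‖ ≤ C := by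
  let P := HurwitzZeta.hurwitzEvenFEPair 0
  have convergent (r : ℝ) : MellinConvergent P.f_modif r :=
    (P.isStrongFEPair_toStrongFEPair.hasMellin r).1
  obtain ⟨C, hC⟩ := exists_norm_mellin_le (convergent (a / 2)) (convergent (b / 2))
  refine ⟨C / 2, fun s hs ↦ ?_⟩
  have half_mem : (s / 2).re ∈ Icc (a / 2) (b / 2) := by
    rw [div_ofNat_re]
    constructor <;> linarith [hs.1, hs.2]
  rw [← HurwitzZeta.completedHurwitzZetaEven₀_zero, HurwitzZeta.completedHurwitzZetaEven₀,
    norm_div, norm_ofNat]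
  gcongr
  exact hC (s / 2) half_mem

/-- The entire function `s (s - 1) π^(-s/2) Γ(s/2) ζ(s)`, which is twice Riemann's `ξ`. Mathlib's
`completedRiemannZeta₀ s` is the completed zeta function with its polar part `1 / s + 1 / (1 - s)`
restored, which turns the product into the formula below. -/
noncomputable def riemannXi (s : ℂ) : ℂ := s * (s - 1) * completedRiemannZeta₀ s + 1

theorem differentiable_riemannXi : Differentiable ℂ riemannXi := by
  unfold riemannXi
  have := differentiable_completedZeta₀
  fun_prop

theorem riemannXi_one_sub (s : ℂ) : riemannXi (1 - s) = riemannXi s := by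
  rw [riemannXi, riemannXi, completedRiemannZeta₀_one_sub]
  ring

theorem riemannXi_one : riemannXi 1 = 1 := by simp [riemannXi]

theorem riemannXi_eq_mul_riemannZeta {s : ℂ} (hs : 0 < s.re) (hs1 : s ≠ 1) :
    riemannXi s = s * (s - 1) * Gammaℝ s * riemannZeta s := by
  have hs0 : s ≠ 0 := ne_zero_of_re_pos hs
  have Gamma_ne := Gammaℝ_ne_zero_of_re_pos hs
  have : s - 1 ≠ 0 := sub_ne_zero.2 hs1
  have : 1 - s ≠ 0 := sub_ne_zero.2 hs1.symm
  rw [riemannZeta_def_of_ne_zero hs0, completedRiemannZeta_eq, riemannXi]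
  field_simp
  ring

theorem riemannXi_conj (s : ℂ) : riemannXi (conj s) = conj (riemannXi s) := by
  have right_half_plane (w : ℂ) (hw : 0 < w.re) : riemannXi (conj w) = conj (riemannXi w) := by
    obtain rfl | hw1 := eq_or_ne w 1
    · simp [riemannXi_one]
    · have conj_ne : conj w ≠ 1 := fun h ↦ hw1 (by simpa using congrArg conj h)
      rw [riemannXi_eq_mul_riemannZeta hw hw1, riemannXi_eq_mul_riemannZeta (by simpa) conj_ne,
        Gammaℝ_conj, riemannZeta_conj]
      simp
  obtain hs | hs := lt_or_ge 0 s.re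
  · exact right_half_plane s hs
  · have := right_half_plane (1 - s) (by rw [sub_re, one_re]; linarith)
    rwa [map_sub, map_one, riemannXi_one_sub, riemannXi_one_sub] at this

theorem riemannXi_ne_zero (hRH : RH) {s : ℂ} (hs : 1 / 2 < s.re) : riemannXi s ≠ 0 := by
  obtain rfl | hs1 := eq_or_ne s 1
  · simp [riemannXi_one]
  have hs0 : 0 < s.re := by linarith
  have zeta_ne : riemannZeta s ≠ 0 := fun hz ↦ by
    obtain h | h := lt_or_ge s.re 1
    · exact hs.ne' (hRH s hz hs0 h)
    · exact riemannZeta_ne_zero_of_one_le_re h hz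
  rw [riemannXi_eq_mul_riemannZeta hs0 hs1]
  exact mul_ne_zero (mul_ne_zero (mul_ne_zero (ne_zero_of_re_pos hs0) (sub_ne_zero.2 hs1))
    (Gammaℝ_ne_zero_of_re_pos hs0)) zeta_ne

theorem exists_norm_riemannXi_le (a b : ℝ) :
    ∃ C, ∀ s : ℂ, s.re ∈ Icc a b → ‖riemannXi s‖ ≤ Real.exp (C * (1 + |s.im|)) := by
  obtain ⟨C, hC⟩ := exists_norm_completedRiemannZeta₀_le a b
  refine ⟨|C| + 2 * (|a| + |b| + 2), fun s hs ↦ ?_⟩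
  set τ := 1 + |s.im| with hτ
  have τ_ge : 1 ≤ τ := by simp [hτ]
  have norm_s : 1 + ‖s‖ ≤ (|a| + |b| + 2) * τ := by
    have re_le : |s.re| ≤ |a| + |b| := by
      have := abs_le_max_abs_abs hs.1 hs.2
      exact this.trans (max_le_add_of_nonneg (abs_nonneg a) (abs_nonneg b))
    have := norm_le_abs_re_add_abs_im s
    nlinarith [abs_nonneg a, abs_nonneg b]
  have norm_sub_one : ‖s - 1‖ ≤ 1 + ‖s‖ := by
    simpa [add_comm] using norm_sub_le s 1
  calc
    ‖riemannXi s‖ ≤ ‖s‖ * ‖s - 1‖ * ‖completedRiemannZeta₀ s‖ + 1 := by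
      simpa [riemannXi] using norm_add_le (s * (s - 1) * completedRiemannZeta₀ s) 1
    _ ≤ (1 + ‖s‖) * (1 + ‖s‖) * |C| + (1 + ‖s‖) * (1 + ‖s‖) := by
      have := norm_nonneg s
      gcongr
      · linarith
      · exact (hC s hs).trans (le_abs_self C)
      · nlinarith
    _ = (|C| + 1) * (1 + ‖s‖) ^ 2 := by ring
    _ ≤ Real.exp |C| * Real.exp ‖s‖ ^ 2 := by
      gcongr
      · exact Real.add_one_le_exp _
      · linarith [Real.add_one_le_exp ‖s‖]
    _ ≤ Real.exp ((|C| + 2 * (|a| + |b| + 2)) * τ) := by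
      rw [← Real.exp_nat_mul, ← Real.exp_add, Real.exp_le_exp]
      push_cast
      nlinarith [abs_nonneg C]

theorem norm_riemannZeta_sub_one_le {s : ℂ} (hs : 2 ≤ s.re) : ‖riemannZeta s - 1‖ ≤ 13 / 20 := by
  have hs1 : 1 < s.re := by linarith
  have zeta_tail : HasSum (fun n : ℕ ↦ 1 / ((n + 2 : ℕ) : ℂ) ^ s) (riemannZeta s - 1) := by
    have zeta_sum := (summable_one_div_nat_cpow.2 hs1).hasSum
    rw [← zeta_eq_tsum_one_div_nat_cpow hs1] at zeta_sum
    simpa [Finset.sum_range_succ, ne_zero_of_re_pos (zero_lt_one.trans hs1)] using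
      (hasSum_nat_add_iff' 2).2 zeta_sum
  have zeta_two_tail : HasSum (fun n : ℕ ↦ 1 / ((n + 2 : ℕ) : ℝ) ^ 2) (π ^ 2 / 6 - 1) := by
    simpa [Finset.sum_range_succ] using (hasSum_nat_add_iff' 2).2 hasSum_zeta_two
  have term_le (n : ℕ) : ‖1 / ((n + 2 : ℕ) : ℂ) ^ s‖ ≤ 1 / ((n + 2 : ℕ) : ℝ) ^ 2 := by
    rw [norm_div, norm_one, norm_natCast_cpow_of_pos (by positivity), ← Real.rpow_natCast]
    gcongr
    · exact_mod_cast Nat.le_add_left 1 (n + 1)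
    · exact_mod_cast hs
  calc
    ‖riemannZeta s - 1‖ ≤ π ^ 2 / 6 - 1 :=
      zeta_tail.tsum_eq ▸ tsum_of_norm_bounded zeta_two_tail term_le
    _ ≤ 13 / 20 := by nlinarith [Real.pi_lt_d4, Real.pi_pos]

theorem le_norm_riemannZeta {s : ℂ} (hs : 2 ≤ s.re) : 7 / 20 ≤ ‖riemannZeta s‖ := by
  have := norm_sub_norm_le 1 (riemannZeta s)
  rw [norm_one, norm_sub_rev] at this
  linarith [norm_riemannZeta_sub_one_le hs]

theorem norm_riemannZeta_le {s : ℂ} (hs : 2 ≤ s.re) : ‖riemannZeta s‖ ≤ 33 / 20 := by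
  have := norm_sub_norm_le (riemannZeta s) 1
  rw [norm_one] at this
  linarith [norm_riemannZeta_sub_one_le hs]

theorem exists_exp_le_norm_riemannXi {σ : ℝ} (hσ : 2 ≤ σ) :
    ∃ C, ∀ s : ℂ, s.re = σ → Real.exp (-(C * (1 + |s.im|))) ≤ ‖riemannXi s‖ := by
  obtain ⟨C, hC⟩ := exists_exp_le_norm_Gammaℝ (by linarith : 1 < σ)
  refine ⟨C + 2, fun s hs ↦ ?_⟩
  have hs1 : s ≠ 1 := by
    rintro rfl
    rw [one_re] at hs
    linarith
  have norm_s : 1 ≤ ‖s‖ := (by linarith : 1 ≤ s.re).trans (re_le_norm s)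
  have norm_sub : 1 ≤ ‖s - 1‖ := le_trans (by rw [sub_re, one_re]; linarith) (re_le_norm (s - 1))
  have exp_le : Real.exp (-2) ≤ 7 / 20 := by
    rw [Real.exp_neg]
    exact inv_le_of_inv_le₀ (by norm_num) (by linarith [Real.add_one_le_exp 2])
  rw [riemannXi_eq_mul_riemannZeta (by linarith) hs1, norm_mul, norm_mul, norm_mul]
  calc
    Real.exp (-((C + 2) * (1 + |s.im|)))
      ≤ 1 * 1 * Real.exp (-(C * (1 + |s.im|))) * Real.exp (-2) := by
        rw [one_mul, one_mul, ← Real.exp_add, Real.exp_le_exp]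
        linarith [abs_nonneg s.im]
    _ ≤ ‖s‖ * ‖s - 1‖ * ‖Gammaℝ s‖ * ‖riemannZeta s‖ := by
        gcongr
        · exact hC s hs
        · exact exp_le.trans (le_norm_riemannZeta (by linarith))

theorem norm_le_norm_add_ofReal {z : ℂ} {t : ℝ} (hz : 0 ≤ z.re) (ht : 0 ≤ t) :
    ‖z‖ ≤ ‖z + t‖ := by
  rw [norm_def, norm_def]
  refine Real.sqrt_le_sqrt ?_
  simp only [normSq_apply, add_re, ofReal_re, add_im, ofReal_im, add_zero]
  nlinarith

theorem norm_riemannXi_le_add_of_le_rpow {s : ℂ} {a : ℝ} (ha : 0 < a) (ha1 : a < 1)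
    (hs : 2 ≤ s.re) (h : 5 * π ^ a ≤ (s.re / 2 + a - 1) ^ a) :
    ‖riemannXi s‖ ≤ ‖riemannXi (s + (2 * a : ℝ))‖ := by
  set t := 2 * a with ht
  have shift_re : (s + t).re = s.re + t := by simp
  have ne_one {w : ℂ} (hw : 2 ≤ w.re) : w ≠ 1 := by
    rintro rfl
    norm_num at hw
  have Gamma_growth : 5 * π ^ a * ‖Gamma (s / 2)‖ ≤ ‖Gamma ((s + t) / 2)‖ := by
    have := rpow_mul_norm_Gamma_le ha ha1 (by linarith : 1 - a < s.re / 2) (z := s / 2) (by simp)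
    rw [show s / 2 + a = (s + t) / 2 by rw [ht]; push_cast; ring] at this
    exact (mul_le_mul_of_nonneg_right h (norm_nonneg _)).trans this
  have Gammaℝ_growth : 5 * ‖Gammaℝ s‖ ≤ ‖Gammaℝ (s + t)‖ := by
    have pi_pow : π ^ (-s.re / 2) = π ^ (-(s + t).re / 2) * π ^ a := by
      rw [← Real.rpow_add Real.pi_pos, shift_re, ht]
      ring_nf
    rw [norm_Gammaℝ, norm_Gammaℝ, pi_pow]
    calc
      _ = π ^ (-(s + t).re / 2) * (5 * π ^ a * ‖Gamma (s / 2)‖) := by ring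
      _ ≤ _ := by gcongr
  have zeta_ratio : ‖riemannZeta s‖ ≤ 5 * ‖riemannZeta (s + t)‖ := by
    linarith [norm_riemannZeta_le hs, le_norm_riemannZeta (s := s + t) (by linarith)]
  have norm_s : ‖s‖ ≤ ‖s + t‖ := norm_le_norm_add_ofReal (by linarith) (by linarith)
  have norm_sub : ‖s - 1‖ ≤ ‖s + t - 1‖ := by
    rw [add_sub_right_comm]
    exact norm_le_norm_add_ofReal (by rw [sub_re, one_re]; linarith) (by linarith)
  rw [riemannXi_eq_mul_riemannZeta (by linarith) (ne_one hs),
    riemannXi_eq_mul_riemannZeta (by linarith) (ne_one (w := s + t) (by linarith))]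
  simp only [norm_mul]
  calc
    ‖s‖ * ‖s - 1‖ * ‖Gammaℝ s‖ * ‖riemannZeta s‖
      ≤ ‖s + t‖ * ‖s + t - 1‖ * ‖Gammaℝ s‖ * (5 * ‖riemannZeta (s + t)‖) := by gcongr
    _ = ‖s + t‖ * ‖s + t - 1‖ * (5 * ‖Gammaℝ s‖) * ‖riemannZeta (s + t)‖ := by ring
    _ ≤ ‖s + t‖ * ‖s + t - 1‖ * ‖Gammaℝ (s + t)‖ * ‖riemannZeta (s + t)‖ := by gcongr

theorem norm_riemannXi_le_add (hRH : RH) {s : ℂ} {a : ℝ} (ha : 0 < a) (ha1 : a < 1)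
    (hs : 1 / 2 - a ≤ s.re) : ‖riemannXi s‖ ≤ ‖riemannXi (s + (2 * a : ℝ))‖ := by
  set b := max s.re (2 + 2 * (1 - a + π * 5 ^ a⁻¹))
  have threshold_nonneg : 0 ≤ 1 - a + π * 5 ^ a⁻¹ := by
    have := Real.pi_pos
    exact add_nonneg (by linarith) (by positivity)
  have b_ge : 2 + 2 * (1 - a + π * 5 ^ a⁻¹) ≤ b := le_max_right _ _
  obtain ⟨C, hC⟩ := exists_norm_riemannXi_le (1 / 2 - a) (2 * (b + 2 * a) - 1 / 2)
  obtain ⟨K, hK⟩ := exists_exp_le_norm_of_ne_zero (f := riemannXi) (σ := 1 / 2) (b := b + 2 * a) ha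
    differentiable_riemannXi.differentiableOn (fun z hz ↦ riemannXi_ne_zero hRH hz.1)
    ⟨C, fun z hz ↦ hC z ⟨by linarith [hz.1], hz.2.le⟩⟩
    (exists_exp_le_norm_riemannXi (by linarith))
  have shift_re (z : ℂ) : (z + (2 * a : ℝ)).re = z.re + 2 * a := by simp
  have shift_im (z : ℂ) : (z + (2 * a : ℝ)).im = z.im := by simp
  have reflect {z : ℂ} (hz : z.re = 1 / 2 - a) : z + (2 * a : ℝ) = conj (1 - z) := by
    apply Complex.ext
    · rw [shift_re, conj_re, sub_re, one_re]
      linarith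
    · simp
  refine norm_le_norm_of_vertical_strip (a := 1 / 2 - a) (b := b) (f := riemannXi)
    (g := fun z ↦ riemannXi (z + (2 * a : ℝ))) differentiable_riemannXi.diffContOnCl
    (differentiable_riemannXi.comp (differentiable_id.add_const _)).diffContOnCl
    ⟨C, fun z hz ↦ hC z ⟨hz.1, by linarith [hz.2]⟩⟩ ⟨K, fun z hz ↦ ?_⟩ (fun z hz ↦ ?_)
    (fun z hz ↦ ?_) ⟨hs, le_max_left _ _⟩
  · rw [← shift_im z]
    exact hK _ (by rw [shift_re]; constructor <;> linarith [hz.1, hz.2])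
  · rw [reflect hz, riemannXi_conj, norm_conj, riemannXi_one_sub]
  · refine norm_riemannXi_le_add_of_le_rpow ha ha1 (by linarith) ?_
    have base_le : π * 5 ^ a⁻¹ ≤ z.re / 2 + a - 1 := by linarith
    calc
      5 * π ^ a = (π * 5 ^ a⁻¹) ^ a := by
        rw [Real.mul_rpow Real.pi_pos.le (by positivity), ← Real.rpow_mul (by norm_num),
          inv_mul_cancel₀ ha.ne', Real.rpow_one, mul_comm]
      _ ≤ (z.re / 2 + a - 1) ^ a := by
        have := Real.pi_pos
        gcongr

theorem re_logDeriv_riemannXi_nonneg (hRH : RH) {s : ℂ} (hs : 1 / 2 < s.re) :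
    0 ≤ (logDeriv riemannXi s).re := by
  have increasing : ∀ᶠ t : ℝ in 𝓝[>] 0, ‖riemannXi s‖ ≤ ‖riemannXi (s + t)‖ := by
    filter_upwards [Ioo_mem_nhdsGT (zero_lt_one (α := ℝ))] with t ht
    have := norm_riemannXi_le_add hRH (s := s) (half_pos ht.1) (by linarith [ht.2])
      (by linarith [ht.1])
    rwa [mul_div_cancel₀ t two_ne_zero] at this
  simpa using re_logDeriv_le_re_logDeriv (g := fun _ ↦ (1 : ℂ)) (w := s)
    (differentiable_riemannXi s) (differentiableAt_const 1) (riemannXi_ne_zero hRH hs) one_ne_zero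
    (by simpa using increasing)

end Xi

section Herglotz

open Complex

theorem continuousOn_re_herglotzRieszKernel {w : ℂ} (hw : w ∈ ball 0 1) :
    ContinuousOn (fun e ↦ (herglotzRieszKernel 0 w e).re) (sphere 0 |1|) :=
  continuous_re.comp_continuousOn (continuousOn_herglotzRieszKernel_sphere hw)

theorem circleAverage_re_herglotzRieszKernel_mul_re {h : ℂ → ℂ} (hh : DiffContOnCl ℂ h (ball 0 1))
    {w : ℂ} (hw : w ∈ ball 0 1) :
    Real.circleAverage (fun e ↦ (herglotzRieszKernel 0 w e).re * (h e).re) 0 1 = (h w).re := by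
  have h_cont : ContinuousOn h (sphere 0 |1|) := by
    rw [abs_one]
    exact hh.continuousOn_ball.mono sphere_subset_closedBall
  have integrable := ((continuousOn_re_herglotzRieszKernel hw).smul h_cont).circleIntegrable'
  rw [← hh.circleAverage_re_herglotzRieszKernel_smul hw]
  simpa [Function.comp_def] using reCLM.circleAverage_comp_comm integrable

theorem abs_sum_mul_re_le_of_diffContOnCl {ι : Type*} {t : Finset ι} {a : ι → ℝ} {z : ι → ℂ}
    {C : ℝ} (hz : ∀ i ∈ t, z i ∈ ball 0 1)
    (hC : ∀ e ∈ sphere (0 : ℂ) 1, |∑ i ∈ t, a i * (herglotzRieszKernel 0 (z i) e).re| ≤ C)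
    {h : ℂ → ℂ} (hh : DiffContOnCl ℂ h (ball 0 1)) (hpos : ∀ e ∈ sphere 0 1, 0 ≤ (h e).re) :
    |∑ i ∈ t, a i * (h (z i)).re| ≤ C * (h 0).re := by
  have re_h_cont : ContinuousOn (fun e ↦ (h e).re) (sphere 0 |1|) := by
    rw [abs_one]
    exact continuous_re.comp_continuousOn (hh.continuousOn_ball.mono sphere_subset_closedBall)
  have term_integrable (i : ι) (hi : i ∈ t) : CircleIntegrable
      (fun e ↦ a i • ((herglotzRieszKernel 0 (z i) e).re * (h e).re)) 0 1 :=
    (((continuousOn_re_herglotzRieszKernel (hz i hi)).mul re_h_cont).fun_const_smul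
      _).circleIntegrable'
  have mean_value : Real.circleAverage (fun e ↦ (h e).re) 0 1 = (h 0).re := by
    rw [← circleAverage_re_herglotzRieszKernel_mul_re hh (mem_ball_self one_pos)]
    refine Real.circleAverage_congr_sphere fun e he ↦ ?_
    have : e ≠ 0 := ne_zero_of_mem_sphere (by norm_num) ⟨e, he⟩
    simp [herglotzRieszKernel_def, this]
  set Φ : ℂ → ℝ := fun e ↦ ∑ i ∈ t, a i • ((herglotzRieszKernel 0 (z i) e).re * (h e).re)
  have Φ_integrable : CircleIntegrable Φ 0 1 := CircleIntegrable.fun_sum t term_integrable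
  have Φ_le (e : ℂ) (he : e ∈ sphere (0 : ℂ) |1|) : |Φ e| ≤ C • (h e).re := by
    rw [abs_one] at he
    simp only [Φ, smul_eq_mul, ← mul_assoc, ← Finset.sum_mul]
    rw [abs_mul, abs_of_nonneg (hpos e he)]
    exact mul_le_mul_of_nonneg_right (hC e he) (hpos e he)
  calc
    |∑ i ∈ t, a i * (h (z i)).re| = |Real.circleAverage Φ 0 1| := by
        rw [Real.circleAverage_fun_sum term_integrable]
        congr 1
        refine Finset.sum_congr rfl fun i hi ↦ ?_
        rw [Real.circleAverage_fun_smul,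
          circleAverage_re_herglotzRieszKernel_mul_re hh (hz i hi), smul_eq_mul]
    _ ≤ Real.circleAverage |Φ| 0 1 := Real.abs_circleAverage_le_circleAverage_abs
    _ ≤ Real.circleAverage (fun e ↦ C • (h e).re) 0 1 :=
        Real.circleAverage_mono Φ_integrable.abs
          re_h_cont.circleIntegrable'.const_fun_smul Φ_le
    _ = C * (h 0).re := by rw [Real.circleAverage_fun_smul, mean_value, smul_eq_mul]

theorem abs_sum_mul_re_le_of_differentiableOn {ι : Type*} {t : Finset ι} {a : ι → ℝ} {z : ι → ℂ}
    {C : ℝ} (hz : ∀ i ∈ t, z i ∈ ball 0 1)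
    (hC : ∀ e ∈ sphere (0 : ℂ) 1, |∑ i ∈ t, a i * (herglotzRieszKernel 0 (z i) e).re| ≤ C)
    {h : ℂ → ℂ} (hh : DifferentiableOn ℂ h (ball 0 1)) (hpos : ∀ w ∈ ball 0 1, 0 ≤ (h w).re) :
    |∑ i ∈ t, a i * (h (z i)).re| ≤ C * (h 0).re := by
  have dilation_mem {r : ℝ} (hr : r ∈ Ioo (0 : ℝ) 1) :
      MapsTo (fun w : ℂ ↦ r * w) (closedBall 0 1) (ball 0 1) := fun w hw ↦ by
    rw [mem_closedBall_zero_iff] at hw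
    rw [mem_ball_zero_iff, norm_mul, norm_real, Real.norm_of_nonneg hr.1.le]
    exact (mul_le_of_le_one_right hr.1.le hw).trans_lt hr.2
  have dilated_le {r : ℝ} (hr : r ∈ Ioo (0 : ℝ) 1) :
      |∑ i ∈ t, a i * (h (r * z i)).re| ≤ C * (h 0).re := by
    have dilated_diff : DiffContOnCl ℂ (fun w ↦ h (r * w)) (ball 0 1) := by
      apply DifferentiableOn.diffContOnCl
      rw [closure_ball _ one_ne_zero]
      exact hh.comp (by fun_prop) (dilation_mem hr)
    simpa using abs_sum_mul_re_le_of_diffContOnCl hz hC dilated_diff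
      fun e he ↦ hpos _ (dilation_mem hr (sphere_subset_closedBall he))
  have limit : Tendsto (fun r : ℝ ↦ |∑ i ∈ t, a i * (h (r * z i)).re|) (𝓝[<] 1)
      (𝓝 |∑ i ∈ t, a i * (h (z i)).re|) := by
    refine (tendsto_finsetSum _ fun i hi ↦ ((continuous_re.tendsto _).comp ?_).const_mul _).abs
    have h_at : ContinuousAt h (((1 : ℝ) : ℂ) * z i) := by
      rw [ofReal_one, one_mul]
      exact hh.continuousOn.continuousAt (isOpen_ball.mem_nhds (hz i hi))
    have := (h_at.comp (f := fun r : ℝ ↦ (r : ℂ) * z i) (by fun_prop)).tendsto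
    rw [Function.comp_apply, ofReal_one, one_mul] at this
    exact this.mono_left nhdsWithin_le_nhds
  refine le_of_tendsto limit ?_
  filter_upwards [Ioo_mem_nhdsLT zero_lt_one] with r hr using dilated_le hr

theorem exists_re_eq_half_of_mem_sphere {e : ℂ} (he : e ∈ sphere (0 : ℂ) 1) (he1 : e ≠ 1) :
    ∃ ρ : ℂ, ρ.re = 1 / 2 ∧ e = (ρ - 2) / (ρ + 1) := by
  rw [mem_sphere_zero_iff_norm] at he
  have sub_ne : 1 - e ≠ 0 := sub_ne_zero.2 he1.symm
  have e_sq : normSq e = 1 := by rw [normSq_eq_norm_sq, he, one_pow]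
  refine ⟨(2 + e) / (1 - e), ?_, ?_⟩
  · have denom_pos : 0 < normSq (1 - e) := normSq_pos.2 sub_ne
    rw [div_re, ← add_div, div_eq_iff denom_pos.ne']
    simp only [normSq_apply, add_re, sub_re, add_im, sub_im, one_re, one_im, re_ofNat,
      im_ofNat] at e_sq ⊢
    linear_combination (-3 / 2 : ℝ) * e_sq
  · have add_one : (2 + e) / (1 - e) + 1 = 3 / (1 - e) := by
      field_simp
      ring
    rw [add_one]
    field_simp
    ring

theorem integral_pow_mul_cpow {v : ℂ} (hv : 0 ≤ v.re) (k : ℕ) :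
    ∫ x in (0 : ℝ)..1, (x : ℂ) ^ k * (x : ℂ) ^ v = 1 / (k + v + 1) := by
  have re_pos : 0 < ((k : ℂ) + v + 1).re := by
    simp only [add_re, natCast_re, one_re]
    positivity
  have combine : EqOn (fun x : ℝ ↦ (x : ℂ) ^ k * (x : ℂ) ^ v) (fun x ↦ (x : ℂ) ^ ((k : ℂ) + v))
      (Ioo 0 1) := fun x hx ↦ by
    simp only
    rw [cpow_add _ _ (ofReal_ne_zero.2 hx.1.ne'), cpow_natCast]
  rw [intervalIntegral.integral_congr_Ioo_of_le zero_le_one combine,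
    integral_cpow (Or.inl (by simpa [add_re, neg_lt_iff_pos_add] using re_pos)), ofReal_one,
    one_cpow, ofReal_zero, zero_cpow (ne_zero_of_re_pos re_pos), sub_zero]

/-- Majorant on `[0, 1]` of the weights whose `k`-th moments are the values at `s = k + 2` of the
Herglotz kernels of the half-plane `Re s > 1 / 2`, divided by `(k + 2) (k + 3)`. -/
noncomputable def kernelBound (x : ℝ) : ℝ := 2 * √x + 3 * x + x ^ 2

theorem continuous_kernelBound : Continuous kernelBound := by
  unfold kernelBound
  fun_prop

theorem integral_pow_mul_kernelWeight {v : ℂ} (hv : 0 < v.re) (α β : ℂ) (k : ℕ) :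
    ∫ x in (0 : ℝ)..1, (x : ℂ) ^ k * (α * (x : ℂ) ^ v + β * x + (x : ℂ) ^ 2) =
      α / (k + v + 1) + β / (k + 2) + 1 / (k + 3) := by
  have cpow_cont := continuous_ofReal_cpow_const hv
  have moment_one := integral_pow_mul_cpow (v := 1) (by simp) k
  have moment_two := integral_pow_mul_cpow (v := 2) (by simp) k
  simp only [cpow_one, cpow_ofNat] at moment_one moment_two
  calc
    _ = ∫ x in (0 : ℝ)..1, (α * ((x : ℂ) ^ k * (x : ℂ) ^ v) + β * ((x : ℂ) ^ k * x) +
          (x : ℂ) ^ k * (x : ℂ) ^ 2) := by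
      congr! 2
      ring
    _ = α * (1 / (k + v + 1)) + β * (1 / (k + 1 + 1)) + 1 / (k + 2 + 1) := by
      rw [intervalIntegral.integral_add, intervalIntegral.integral_add,
        intervalIntegral.integral_const_mul, intervalIntegral.integral_const_mul,
        integral_pow_mul_cpow hv.le, moment_one, moment_two]
      all_goals exact Continuous.intervalIntegrable (by fun_prop) _ _
    _ = _ := by ring

theorem norm_kernelWeight_le {v α β : ℂ} (hv : v.re = 1 / 2) (hα : ‖α‖ ≤ 2) (hβ : ‖β‖ ≤ 3)
    {x : ℝ} (hx : x ∈ Ioc 0 1) : ‖α * (x : ℂ) ^ v + β * x + (x : ℂ) ^ 2‖ ≤ kernelBound x := by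
  refine norm_add₃_le.trans ?_
  rw [norm_mul, norm_mul, norm_pow, norm_cpow_eq_rpow_re_of_pos hx.1, hv, ← Real.sqrt_eq_rpow,
    norm_real, Real.norm_of_nonneg hx.1.le, kernelBound]
  have := hx.1
  gcongr

theorem herglotzRieszKernel_div_eq {ρ : ℂ} (hρ : ρ.re = 1 / 2) (k : ℕ) :
    herglotzRieszKernel 0 (k / (k + 3)) ((ρ - 2) / (ρ + 1)) / ((k + 2) * (k + 3)) =
      2 * (2 - ρ) / (3 * ρ) / (k + (1 - ρ) + 1) + -(ρ + 4) / (3 * ρ) / (k + 2) + 1 / (k + 3) := by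
  have ρ_ne : ρ ≠ 0 := ne_zero_of_re_pos (by rw [hρ]; norm_num)
  have ρ_add_ne : ρ + 1 ≠ 0 := ne_zero_of_re_pos (by rw [add_re, hρ, one_re]; norm_num)
  have pole_ne : (k : ℂ) + (1 - ρ) + 1 ≠ 0 := ne_zero_of_re_pos <| by
    simp only [add_re, sub_re, natCast_re, one_re, hρ]
    positivity
  have k_add_two_ne : (k : ℂ) + 2 ≠ 0 := by norm_cast
  have k_add_three_ne : (k : ℂ) + 3 ≠ 0 := by norm_cast
  have denominator : (ρ - 2) / (ρ + 1) - k / (k + 3) =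
      -3 * (k + (1 - ρ) + 1) / ((ρ + 1) * (k + 3)) := by
    field_simp
    ring
  rw [herglotzRieszKernel_def, sub_zero, sub_zero, denominator]
  field_simp
  ring

theorem herglotzRieszKernel_one_div_eq (k : ℕ) :
    herglotzRieszKernel 0 (k / (k + 3)) 1 / ((k + 2) * (k + 3)) =
      -1 / 3 / (k + 2) + 1 / (k + 3) := by
  have k_add_two_ne : (k : ℂ) + 2 ≠ 0 := by norm_cast
  have k_add_three_ne : (k : ℂ) + 3 ≠ 0 := by norm_cast
  have denominator : (1 : ℂ) - k / (k + 3) = 3 / (k + 3) := by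
    field_simp
    ring
  rw [herglotzRieszKernel_def, sub_zero, sub_zero, denominator]
  field_simp
  ring

theorem exists_moments_eq_herglotzRieszKernel {e : ℂ} (he : e ∈ sphere (0 : ℂ) 1) :
    ∃ w : ℝ → ℂ, Continuous w ∧ (∀ x ∈ Ioc 0 1, ‖w x‖ ≤ kernelBound x) ∧
      ∀ k : ℕ, ∫ x in (0 : ℝ)..1, (x : ℂ) ^ k * w x =
        herglotzRieszKernel 0 (k / (k + 3)) e / ((k + 2) * (k + 3)) := by
  suffices ∃ v α β : ℂ, v.re = 1 / 2 ∧ ‖α‖ ≤ 2 ∧ ‖β‖ ≤ 3 ∧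
      ∀ k : ℕ, herglotzRieszKernel 0 (k / (k + 3)) e / ((k + 2) * (k + 3)) =
        α / (k + v + 1) + β / (k + 2) + 1 / (k + 3) by
    obtain ⟨v, α, β, hv, hα, hβ, kernel_eq⟩ := this
    have v_pos : 0 < v.re := by rw [hv]; norm_num
    have cpow_cont := continuous_ofReal_cpow_const v_pos
    exact ⟨fun x ↦ α * (x : ℂ) ^ v + β * x + (x : ℂ) ^ 2, by fun_prop,
      fun x hx ↦ norm_kernelWeight_le hv hα hβ hx,
      fun k ↦ by rw [kernel_eq, integral_pow_mul_kernelWeight v_pos]⟩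
  obtain rfl | he1 := eq_or_ne e 1
  · exact ⟨1 / 2, 0, -1 / 3, by simp, by simp, by norm_num,
      fun k ↦ by simp [herglotzRieszKernel_one_div_eq]⟩
  obtain ⟨ρ, hρ, rfl⟩ := exists_re_eq_half_of_mem_sphere he he1
  have norm_ρ : 1 / 2 ≤ ‖ρ‖ := hρ ▸ re_le_norm ρ
  have two_sub : 2 - ρ = 1 + conj ρ := by
    apply Complex.ext <;> simp [hρ]
    norm_num
  refine ⟨1 - ρ, 2 * (2 - ρ) / (3 * ρ), -(ρ + 4) / (3 * ρ), by simp [hρ]; norm_num, ?_, ?_,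
    herglotzRieszKernel_div_eq hρ⟩
  · have := norm_add_le 1 (conj ρ)
    rw [norm_one, norm_conj] at this
    rw [two_sub, norm_div, norm_mul, norm_mul, norm_ofNat, norm_ofNat, div_le_iff₀ (by positivity)]
    linarith
  · have := norm_add_le ρ 4
    rw [norm_ofNat] at this
    rw [norm_div, norm_mul, norm_neg, norm_ofNat, div_le_iff₀ (by positivity)]
    linarith

theorem integral_eval_smul {E : Type*} [NormedAddCommGroup E] [NormedSpace ℝ E] {w : ℝ → E}
    {a b : ℝ} (hw : IntervalIntegrable w volume a b) (P : ℝ[X]) :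
    ∫ x in a..b, P.eval x • w x = P.sum fun k c ↦ c • ∫ x in a..b, x ^ k • w x := by
  have term_integrable (k : ℕ) :
      IntervalIntegrable (fun x ↦ P.coeff k • x ^ k • w x) volume a b :=
    (hw.continuousOn_smul (continuous_pow k).continuousOn).smul (P.coeff k)
  simp only [eval_eq_sum, sum_def, Finset.sum_smul, mul_smul]
  rw [intervalIntegral.integral_finsetSum fun k _ ↦ term_integrable k]
  simp only [intervalIntegral.integral_smul]

theorem abs_sum_mul_re_herglotzRieszKernel_le {P : ℝ[X]} (hP : ∀ x ∈ Icc 0 1, 0 ≤ P.eval x)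
    {e : ℂ} (he : e ∈ sphere (0 : ℂ) 1) :
    |∑ k ∈ P.support, P.coeff k / ((k + 2) * (k + 3)) *
      (herglotzRieszKernel 0 (k / (k + 3)) e).re| ≤
      ∫ x in (0 : ℝ)..1, P.eval x * kernelBound x := by
  obtain ⟨w, w_cont, w_le, moments⟩ := exists_moments_eq_herglotzRieszKernel he
  have integral_eq : ∫ x in (0 : ℝ)..1, P.eval x • w x = ∑ k ∈ P.support,
      P.coeff k • (herglotzRieszKernel 0 (k / (k + 3)) e / ((k + 2) * (k + 3))) := by
    rw [integral_eval_smul (w_cont.intervalIntegrable 0 1), sum_def]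
    refine Finset.sum_congr rfl fun k _ ↦ ?_
    rw [← moments]
    simp only [real_smul, ofReal_pow]
  have re_integral : (∫ x in (0 : ℝ)..1, P.eval x • w x).re = ∑ k ∈ P.support,
      P.coeff k / ((k + 2) * (k + 3)) * (herglotzRieszKernel 0 (k / (k + 3)) e).re := by
    rw [integral_eq, re_sum]
    refine Finset.sum_congr rfl fun k _ ↦ ?_
    rw [show ((k : ℂ) + 2) * (k + 3) = ((k + 2) * (k + 3) : ℝ) by push_cast; rfl, smul_re,
      div_ofReal_re, smul_eq_mul, div_mul_eq_mul_div, mul_div_assoc]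
  rw [← re_integral]
  refine (abs_re_le_norm _).trans
    (intervalIntegral.norm_integral_le_of_norm_le zero_le_one (.of_forall fun x hx ↦ ?_) <|
      (P.continuous.mul continuous_kernelBound).intervalIntegrable 0 1)
  have eval_nonneg := hP x ⟨hx.1.le, hx.2⟩
  rw [norm_smul, Real.norm_of_nonneg eval_nonneg]
  exact mul_le_mul_of_nonneg_left (w_le x hx) eval_nonneg

theorem half_lt_re_two_add_div_one_sub {z : ℂ} (hz : z ∈ ball 0 1) :
    1 / 2 < ((2 + z) / (1 - z)).re := by
  have normSq_lt : normSq z < 1 := by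
    rw [normSq_eq_norm_sq]
    exact pow_lt_one₀ (norm_nonneg z) (mem_ball_zero_iff.1 hz) two_ne_zero
  have denom_pos : 0 < normSq (1 - z) := by
    rw [normSq_pos, sub_ne_zero]
    rintro rfl
    simp at hz
  rw [div_re, ← add_div, lt_div_iff₀ denom_pos]
  simp only [normSq_apply, add_re, sub_re, add_im, sub_im, one_re, one_im, re_ofNat,
    im_ofNat] at normSq_lt ⊢
  linarith

theorem two_add_div_one_sub_node (k : ℕ) :
    (2 + (k : ℂ) / (k + 3)) / (1 - k / (k + 3)) = k + 2 := by
  have : (k : ℂ) + 3 ≠ 0 := by norm_cast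
  have one_sub : 1 - (k : ℂ) / (k + 3) = 3 / (k + 3) := by
    field_simp
    ring
  rw [one_sub]
  field_simp
  ring

theorem abs_sum_mul_re_le_of_re_nonneg {F : ℂ → ℂ}
    (hF : DifferentiableOn ℂ F {s | 1 / 2 < s.re}) (hpos : ∀ s, 1 / 2 < s.re → 0 ≤ (F s).re)
    {P : ℝ[X]} (hP : ∀ x ∈ Icc 0 1, 0 ≤ P.eval x) :
    |∑ k ∈ P.support, P.coeff k / ((k + 2) * (k + 3)) * (F (k + 2)).re| ≤
      (∫ x in (0 : ℝ)..1, P.eval x * kernelBound x) * (F 2).re := by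
  have node_mem (k : ℕ) : (k / (k + 3) : ℂ) ∈ ball 0 1 := by
    rw [mem_ball_zero_iff, norm_div, norm_natCast, ← Nat.cast_ofNat (R := ℂ), ← Nat.cast_add,
      norm_natCast, div_lt_one (by positivity)]
    norm_cast
    lia
  have cayley_diff : DifferentiableOn ℂ (fun z : ℂ ↦ (2 + z) / (1 - z)) (ball 0 1) := by
    refine DifferentiableOn.div (by fun_prop) (by fun_prop) fun z hz ↦ sub_ne_zero.2 ?_
    rintro rfl
    simp at hz
  have := abs_sum_mul_re_le_of_differentiableOn (t := P.support) (fun k _ ↦ node_mem k)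
    (fun e he ↦ abs_sum_mul_re_herglotzRieszKernel_le hP he)
    (hF.comp cayley_diff fun z hz ↦ half_lt_re_two_add_div_one_sub hz)
    fun z hz ↦ hpos _ (half_lt_re_two_add_div_one_sub hz)
  simpa only [Function.comp_apply, two_add_div_one_sub_node, add_zero, sub_zero, div_one] using this

end Herglotz

section LogDeriv

open Complex
open scoped ArithmeticFunction.vonMangoldt

theorem ne_neg_natCast_of_re_pos {s : ℂ} (hs : 0 < s.re) (m : ℕ) : s ≠ -m := by
  rintro rfl
  rw [neg_re, natCast_re, neg_pos] at hs
  exact m.cast_nonneg.not_gt hs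

theorem differentiableOn_digamma : DifferentiableOn ℂ digamma {s | 0 < s.re} := by
  have Gamma_diff : DifferentiableOn ℂ Gamma {s | 0 < s.re} := fun s hs ↦
    (differentiableAt_Gamma s (ne_neg_natCast_of_re_pos hs)).differentiableWithinAt
  rw [digamma_def]
  exact (Gamma_diff.deriv (isOpen_lt continuous_const continuous_re)).div Gamma_diff
    fun s hs ↦ Gamma_ne_zero_of_re_pos hs

theorem differentiableOn_logDeriv_riemannXi (hRH : RH) :
    DifferentiableOn ℂ (logDeriv riemannXi) {s | 1 / 2 < s.re} :=
  (differentiable_riemannXi.differentiableOn.deriv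
      (isOpen_lt continuous_const continuous_re)).div
    differentiable_riemannXi.differentiableOn fun _ hs ↦ riemannXi_ne_zero hRH hs

theorem differentiableAt_Gammaℝ {s : ℂ} (hs : 0 < s.re) : DifferentiableAt ℂ Gammaℝ s := by
  have inv_ne : (Gammaℝ s)⁻¹ ≠ 0 := inv_ne_zero (Gammaℝ_ne_zero_of_re_pos hs)
  simpa only [Pi.inv_def, inv_inv] using
    (differentiable_Gammaℝ_inv s).inv inv_ne

theorem logDeriv_Gammaℝ {s : ℂ} (hs : 0 < s.re) :
    logDeriv Gammaℝ s = (digamma (s / 2) - Real.log π) / 2 := by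
  have half_re : 0 < (s / 2).re := by
    rw [div_ofNat_re]
    exact half_pos hs
  have pi_ne : (π : ℂ) ≠ 0 := by exact_mod_cast Real.pi_ne_zero
  have Gamma_diff : DifferentiableAt ℂ Gamma (s / 2) :=
    differentiableAt_Gamma _ (ne_neg_natCast_of_re_pos half_re)
  have pow_deriv : HasDerivAt (fun z : ℂ ↦ (π : ℂ) ^ (-z / 2))
      ((π : ℂ) ^ (-s / 2) * log π * (-1 / 2)) s :=
    ((hasDerivAt_id s).neg.div_const 2).const_cpow (.inl pi_ne)
  have logDeriv_pow : logDeriv (fun z : ℂ ↦ (π : ℂ) ^ (-z / 2)) s = -Real.log π / 2 := by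
    have : (π : ℂ) ^ (-s / 2) ≠ 0 := by simp [cpow_eq_zero_iff, pi_ne]
    rw [logDeriv_apply, pow_deriv.deriv, ofReal_log Real.pi_pos.le]
    field_simp
  have logDeriv_Gamma : logDeriv (fun z : ℂ ↦ Gamma (z / 2)) s = digamma (s / 2) / 2 := by
    have := logDeriv_comp (g := fun z : ℂ ↦ z / 2) Gamma_diff (by fun_prop)
    simpa [digamma_def, Function.comp_def, div_eq_mul_inv] using this
  have Gammaℝ_eq : Gammaℝ = fun z : ℂ ↦ (π : ℂ) ^ (-z / 2) * Gamma (z / 2) := funext Gammaℝ_def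
  rw [Gammaℝ_eq, logDeriv_mul (g := fun z ↦ Gamma (z / 2)) s (by simp [cpow_eq_zero_iff, pi_ne])
    (Gamma_ne_zero_of_re_pos half_re) pow_deriv.differentiableAt
    (Gamma_diff.comp s (by fun_prop)), logDeriv_pow, logDeriv_Gamma]
  ring

theorem logDeriv_riemannXi {s : ℂ} (hs : 1 < s.re) :
    logDeriv riemannXi s =
      1 / (s - 1) + (digamma (s / 2 + 1) - Real.log π) / 2 - LSeries (fun n ↦ (Λ n : ℂ)) s := by
  have hs0 : 0 < s.re := zero_lt_one.trans hs
  have ne_one {z : ℂ} (hz : 1 < z.re) : z ≠ 1 := by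
    rintro rfl
    exact lt_irrefl _ hz
  have s_ne : s ≠ 0 := ne_zero_of_re_pos hs0
  have sub_ne : s - 1 ≠ 0 := sub_ne_zero.2 (ne_one hs)
  have Gammaℝ_diff := differentiableAt_Gammaℝ hs0
  have Gammaℝ_ne : Gammaℝ s ≠ 0 := Gammaℝ_ne_zero_of_re_pos hs0
  have factorization :
      riemannXi =ᶠ[𝓝 s] fun z ↦ z * ((z - 1) * (Gammaℝ z * riemannZeta z)) := by
    filter_upwards [(isOpen_lt continuous_const continuous_re).mem_nhds hs] with z hz
    rw [riemannXi_eq_mul_riemannZeta (zero_lt_one.trans hz) (ne_one hz)]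
    ring
  have half_re : 0 < (s / 2).re := by
    rw [div_ofNat_re]
    exact half_pos hs0
  have zeta_diff : DifferentiableAt ℂ riemannZeta s := differentiableAt_riemannZeta (ne_one hs)
  have zeta_ne : riemannZeta s ≠ 0 := riemannZeta_ne_zero_of_one_le_re hs.le
  rw [logDeriv_apply, factorization.deriv_eq, factorization.eq_of_nhds, ← logDeriv_apply,
    logDeriv_mul (g := fun z ↦ (z - 1) * (Gammaℝ z * riemannZeta z)) s s_ne
      (mul_ne_zero sub_ne (mul_ne_zero Gammaℝ_ne zeta_ne)) (by fun_prop) (by fun_prop),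
    logDeriv_mul (f := fun z ↦ z - 1) (g := fun z ↦ Gammaℝ z * riemannZeta z) s sub_ne
      (mul_ne_zero Gammaℝ_ne zeta_ne) (by fun_prop) (by fun_prop),
    logDeriv_mul s Gammaℝ_ne zeta_ne Gammaℝ_diff zeta_diff, logDeriv_Gammaℝ hs0,
    digamma_apply_add_one _ (ne_neg_natCast_of_re_pos half_re),
    ArithmeticFunction.LSeries_vonMangoldt_eq_deriv_riemannZeta_div hs]
  simp only [logDeriv_apply, deriv_id'', deriv_sub_const]
  field_simp
  ring

/-- Half the increment of the digamma function from `1` to `s / 2 + 1`, that is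
`∑ₙ (1 / (2 n) - 1 / (s + 2 n))`. Up to the pole at `s = 1` and a constant, it is the archimedean
part of `ξ'/ξ`; like `ξ'/ξ`, it has nonnegative real part to the right of the critical line. -/
noncomputable def digammaIncrement (s : ℂ) : ℂ := (digamma (s / 2 + 1) - digamma 1) / 2

theorem differentiableOn_digammaIncrement :
    DifferentiableOn ℂ digammaIncrement {s | 1 / 2 < s.re} := by
  have digamma_diff : DifferentiableOn ℂ (fun s ↦ digamma (s / 2 + 1)) {s | 1 / 2 < s.re} :=
    differentiableOn_digamma.comp (by fun_prop) fun s (hs : 1 / 2 < s.re) ↦ by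
      rw [mem_ofPred, add_re, div_ofNat_re, one_re]
      linarith
  exact (digamma_diff.sub_const _).div_const 2

theorem re_digammaIncrement_nonneg {s : ℂ} (hs : 0 ≤ s.re) : 0 ≤ (digammaIncrement s).re := by
  have one_le : (1 : ℝ) ≤ (s / 2 + 1).re := by simpa using div_nonneg hs zero_le_two
  have := re_digamma_le_re_digamma one_pos one_le
  rw [ofReal_one] at this
  rw [digammaIncrement, div_ofNat_re, sub_re]
  linarith

theorem re_digammaIncrement_two : (digammaIncrement 2).re = 1 / 2 := by
  rw [digammaIncrement, div_self two_ne_zero,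
    digamma_apply_add_one 1 (ne_neg_natCast_of_re_pos (by simp))]
  simp

/-- The value `-(ζ'/ζ)(k + 2) = ∑ Λ(n) / n ^ (k + 2)`. -/
noncomputable def vonMangoldtSeries (k : ℕ) : ℝ := ∑' n : ℕ, Λ n / (n : ℝ) ^ (k + 2)

theorem term_vonMangoldt_natCast_add_two (k : ℕ) :
    LSeries.term (fun n ↦ (Λ n : ℂ)) (k + 2) = fun n ↦ ((Λ n / (n : ℝ) ^ (k + 2) : ℝ) : ℂ) := by
  ext n
  rw [LSeries.term_def]
  split_ifs with hn
  · simp [hn]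
  · push_cast
    rw [← cpow_natCast]
    push_cast
    rfl

theorem summable_vonMangoldt_div_pow (k : ℕ) :
    Summable fun n : ℕ ↦ Λ n / (n : ℝ) ^ (k + 2) := by
  have := ArithmeticFunction.LSeriesSummable_vonMangoldt (s := k + 2)
    (by rw [add_re, natCast_re, re_ofNat]; linarith [k.cast_nonneg (α := ℝ)])
  rw [LSeriesSummable, term_vonMangoldt_natCast_add_two] at this
  exact_mod_cast this

theorem LSeries_vonMangoldt_natCast_add_two (k : ℕ) :
    LSeries (fun n ↦ (Λ n : ℂ)) (k + 2) = vonMangoldtSeries k := by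
  rw [LSeries, term_vonMangoldt_natCast_add_two, vonMangoldtSeries, ofReal_tsum]

/-- The constant `(γ + log π) / 2` separating `ξ'/ξ` from the difference of its pole at `s = 1`,
`digammaIncrement` and the Dirichlet series of `Λ`; it becomes the linear coefficient in the
expansion of `log (δ n)`. -/
noncomputable def gammaLogPi : ℝ := (Real.eulerMascheroniConstant + Real.log π) / 2

theorem re_digammaIncrement_sub_re_logDeriv_riemannXi (k : ℕ) :
    (digammaIncrement (k + 2)).re - (logDeriv riemannXi (k + 2)).re =
      gammaLogPi - 1 / (k + 1) + vonMangoldtSeries k := by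
  have one_lt_re : 1 < (k + 2 : ℂ).re := by
    rw [add_re, natCast_re, re_ofNat]
    linarith [k.cast_nonneg (α := ℝ)]
  have complex_identity : digammaIncrement (k + 2) - logDeriv riemannXi (k + 2) =
      ((gammaLogPi - 1 / (k + 1) + vonMangoldtSeries k : ℝ) : ℂ) := by
    rw [logDeriv_riemannXi one_lt_re, LSeries_vonMangoldt_natCast_add_two, digammaIncrement,
      digamma_one, gammaLogPi, add_sub_assoc (k : ℂ), show (2 - 1 : ℂ) = 1 by norm_num]
    push_cast
    ring
  rw [← sub_re, complex_identity, ofReal_re]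

theorem le_gammaLogPi : 79 / 100 ≤ gammaLogPi := by
  have log_three_le : Real.log 3 ≤ Real.log π :=
    Real.log_le_log (by norm_num) Real.pi_gt_three.le
  rw [gammaLogPi]
  linarith [Real.one_half_lt_eulerMascheroniConstant, Real.log_three_gt_d9]

theorem gammaLogPi_le : gammaLogPi ≤ 11 / 10 := by
  have log_pi_le : Real.log π ≤ 2 * Real.log 2 := by
    rw [← Nat.cast_ofNat (n := 2), ← Real.log_pow]
    exact Real.log_le_log Real.pi_pos (by norm_num [Real.pi_le_four])
  rw [gammaLogPi]
  linarith [Real.eulerMascheroniConstant_lt_two_thirds, Real.log_two_lt_d9]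

theorem le_vonMangoldtSeries_zero : 31 / 100 ≤ vonMangoldtSeries 0 := by
  have partial_sum :=
    (summable_vonMangoldt_div_pow 0).sum_le_tsum (Finset.range 5) fun n _ ↦
      div_nonneg ArithmeticFunction.vonMangoldt_nonneg (by positivity)
  have Λ_two : Λ 2 = Real.log 2 := ArithmeticFunction.vonMangoldt_apply_prime Nat.prime_two
  have Λ_three : Λ 3 = Real.log 3 := ArithmeticFunction.vonMangoldt_apply_prime Nat.prime_three
  have Λ_four : Λ 4 = Real.log 2 := by
    rw [show 4 = 2 ^ 2 by norm_num, ArithmeticFunction.vonMangoldt_apply_pow two_ne_zero, Λ_two]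
  norm_num [Finset.sum_range_succ, Λ_two, Λ_three, Λ_four] at partial_sum
  rw [vonMangoldtSeries]
  linarith [Real.log_two_gt_d9, Real.log_three_gt_d9]

theorem re_logDeriv_riemannXi_two_le : (logDeriv riemannXi 2).re ≤ 2 / 5 := by
  have := re_digammaIncrement_sub_re_logDeriv_riemannXi 0
  norm_num [re_digammaIncrement_two] at this
  linarith [le_gammaLogPi, le_vonMangoldtSeries_zero]

theorem abs_sum_mul_le_integral_kernelBound (hRH : RH) {P : ℝ[X]}
    (hP : ∀ x ∈ Icc 0 1, 0 ≤ P.eval x) :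
    |∑ k ∈ P.support, P.coeff k *
        ((gammaLogPi - 1 / (k + 1) + vonMangoldtSeries k) / ((k + 2) * (k + 3)))| ≤
      9 / 10 * ∫ x in (0 : ℝ)..1, P.eval x * kernelBound x := by
  have digamma_bound := abs_sum_mul_re_le_of_re_nonneg differentiableOn_digammaIncrement
    (fun s hs ↦ re_digammaIncrement_nonneg (by linarith)) hP
  have xi_bound := abs_sum_mul_re_le_of_re_nonneg (differentiableOn_logDeriv_riemannXi hRH)
    (fun s hs ↦ re_logDeriv_riemannXi_nonneg hRH hs) hP
  have integral_nonneg : 0 ≤ ∫ x in (0 : ℝ)..1, P.eval x * kernelBound x :=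
    intervalIntegral.integral_nonneg zero_le_one fun x hx ↦
      mul_nonneg (hP x hx) (by have := hx.1; rw [kernelBound]; positivity)
  have sum_eq : ∑ k ∈ P.support, P.coeff k *
        ((gammaLogPi - 1 / (k + 1) + vonMangoldtSeries k) / ((k + 2) * (k + 3))) =
      ∑ k ∈ P.support, P.coeff k / ((k + 2) * (k + 3)) * (digammaIncrement (k + 2)).re -
        ∑ k ∈ P.support, P.coeff k / ((k + 2) * (k + 3)) * (logDeriv riemannXi (k + 2)).re := by
    rw [← Finset.sum_sub_distrib]
    refine Finset.sum_congr rfl fun k _ ↦ ?_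
    rw [← re_digammaIncrement_sub_re_logDeriv_riemannXi]
    ring
  rw [re_digammaIncrement_two] at digamma_bound
  rw [sum_eq]
  refine (abs_sub _ _).trans ?_
  linarith [mul_le_mul_of_nonneg_left re_logDeriv_riemannXi_two_le integral_nonneg]

end LogDeriv

section Localisation

variable {a b : ℝ} {g : ℝ → ℝ}

theorem integral_mul_nonneg_of_forall_polynomial (hab : a ≤ b)
    (hg : IntervalIntegrable g volume a b)
    (h : ∀ P : ℝ[X], (∀ x ∈ Icc a b, 0 ≤ P.eval x) → 0 ≤ ∫ x in a..b, P.eval x * g x)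
    {φ : ℝ → ℝ} (hφ : ContinuousOn φ (Icc a b)) (hφ0 : ∀ x ∈ Icc a b, 0 ≤ φ x) :
    0 ≤ ∫ x in a..b, φ x * g x := by
  have φg_int : IntervalIntegrable (fun x ↦ φ x * g x) volume a b :=
    hg.continuousOn_mul (by rwa [uIcc_of_le hab])
  have approx {ε : ℝ} (hε : 0 < ε) :
      -(2 * ε * ∫ x in a..b, |g x|) ≤ ∫ x in a..b, φ x * g x := by
    obtain ⟨p, hp⟩ := exists_polynomial_near_of_continuousOn a b φ hφ ε hε
    have eval_eq (x : ℝ) : (p + C ε).eval x = p.eval x + ε := by simp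
    have nonneg := h (p + C ε) fun x hx ↦ by
      rw [eval_eq]
      linarith [(abs_lt.1 (hp x hx)).1, hφ0 x hx]
    have pg_int : IntervalIntegrable (fun x ↦ (p + C ε).eval x * g x) volume a b :=
      hg.continuousOn_mul (p + C ε).continuous.continuousOn
    have error : ∫ x in a..b, ((p + C ε).eval x * g x - φ x * g x) ≤
        ∫ x in a..b, 2 * ε * |g x| := by
      refine intervalIntegral.integral_mono_on hab (pg_int.sub φg_int) (hg.abs.const_mul _)
        fun x hx ↦ ?_
      have hpx := abs_lt.1 (hp x hx)
      rw [← sub_mul]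
      refine (le_abs_self _).trans ?_
      rw [abs_mul, eval_eq]
      gcongr
      rw [abs_le]
      constructor <;> linarith [hpx.1, hpx.2]
    rw [intervalIntegral.integral_sub pg_int φg_int, intervalIntegral.integral_const_mul] at error
    linarith
  have limit : Tendsto (fun ε : ℝ ↦ -(2 * ε * ∫ x in a..b, |g x|)) (𝓝[>] 0) (𝓝 0) :=
    tendsto_nhdsWithin_of_tendsto_nhds (Continuous.tendsto' (by fun_prop) _ _ (by simp))
  exact le_of_tendsto limit (eventually_mem_nhdsWithin.mono fun ε hε ↦ approx hε)

theorem nonneg_of_forall_integral_eval_mul_nonneg (hab : a < b)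
    (hg : IntervalIntegrable g volume a b)
    (h : ∀ P : ℝ[X], (∀ x ∈ Icc a b, 0 ≤ P.eval x) → 0 ≤ ∫ x in a..b, P.eval x * g x)
    {x₀ : ℝ} (hx₀ : x₀ ∈ Icc a b) (hc : ContinuousWithinAt g (Icc a b) x₀) : 0 ≤ g x₀ := by
  by_contra! hneg
  obtain ⟨δ, hδ, near⟩ : ∃ δ > 0, ∀ x ∈ Icc a b, |x - x₀| < δ → g x < g x₀ / 2 := by
    have := hc.eventually_lt_const (by linarith : g x₀ < g x₀ / 2)
    obtain ⟨δ, hδ, near⟩ := Metric.mem_nhdsWithin_iff.1 this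
    exact ⟨δ, hδ, fun x hx hd ↦ near ⟨hd, hx⟩⟩
  let bump (x : ℝ) := max (δ - |x - x₀|) 0
  have bump_cont : Continuous bump := by fun_prop
  have bump_nonneg (x : ℝ) : 0 ≤ bump x := le_max_right _ _
  have nonneg := integral_mul_nonneg_of_forall_polynomial hab.le hg h bump_cont.continuousOn
    fun x _ ↦ bump_nonneg x
  have le_integral : ∫ x in a..b, bump x * g x ≤ ∫ x in a..b, g x₀ / 2 * bump x := by
    refine intervalIntegral.integral_mono_on hab.le (hg.continuousOn_mul bump_cont.continuousOn)
      ((bump_cont.const_mul _).intervalIntegrable a b) fun x hx ↦ ?_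
    obtain hd | hd := lt_or_ge |x - x₀| δ
    · rw [mul_comm]
      exact mul_le_mul_of_nonneg_right (near x hx hd).le (bump_nonneg x)
    · simp [bump, max_eq_right (sub_nonpos.2 hd)]
  have bump_pos : 0 < ∫ x in a..b, bump x :=
    intervalIntegral.integral_pos hab bump_cont.continuousOn (fun x _ ↦ bump_nonneg x)
      ⟨x₀, hx₀, by simp [bump, hδ]⟩
  rw [intervalIntegral.integral_const_mul] at le_integral
  nlinarith

end Localisation

section Remainder

open scoped ArithmeticFunction.vonMangoldt

/-- The `n`-th term of `vonMangoldtSum`: supported on `[0, 1 / n]` and, at `x = 1 / N`, equal to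
`Λ(n) (N - n) / N²` for `n ≤ N`. -/
noncomputable def vonMangoldtTerm (n : ℕ) (x : ℝ) : ℝ := Λ n * max (x - n * x ^ 2) 0

/-- The function of `x ∈ (0, 1]` interpolating `log (δ n) / n ^ 2` at `x = 1 / n`. -/
noncomputable def vonMangoldtSum (x : ℝ) : ℝ := ∑' n, vonMangoldtTerm n x

theorem continuous_vonMangoldtTerm (n : ℕ) : Continuous (vonMangoldtTerm n) := by
  unfold vonMangoldtTerm
  fun_prop

theorem vonMangoldtTerm_nonneg (n : ℕ) (x : ℝ) : 0 ≤ vonMangoldtTerm n x :=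
  mul_nonneg ArithmeticFunction.vonMangoldt_nonneg (le_max_right _ _)

theorem vonMangoldtTerm_of_mul_le_one {n : ℕ} {x : ℝ} (hx : 0 ≤ x) (h : n * x ≤ 1) :
    vonMangoldtTerm n x = Λ n * (x - n * x ^ 2) := by
  rw [vonMangoldtTerm, max_eq_left]
  nlinarith

theorem vonMangoldtTerm_of_one_le_mul {n : ℕ} {x : ℝ} (hx : 0 ≤ x) (h : 1 ≤ n * x) :
    vonMangoldtTerm n x = 0 := by
  rw [vonMangoldtTerm, max_eq_right, mul_zero]
  nlinarith

theorem vonMangoldtSum_eq_sum_range {N : ℕ} {x : ℝ} (hx : 0 ≤ x) (hN : 1 ≤ N * x) :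
    vonMangoldtSum x = ∑ n ∈ Finset.range N, vonMangoldtTerm n x := by
  refine tsum_eq_sum fun n hn ↦ vonMangoldtTerm_of_one_le_mul hx (hN.trans ?_)
  rw [Finset.mem_range, not_lt] at hn
  gcongr

theorem continuousAt_vonMangoldtSum {x : ℝ} (hx : 0 < x) : ContinuousAt vonMangoldtSum x := by
  obtain ⟨N, hN⟩ := exists_nat_ge (1 / (x / 2))
  rw [div_le_iff₀ (half_pos hx)] at hN
  have finite_sum : vonMangoldtSum =ᶠ[𝓝 x] fun y ↦ ∑ n ∈ Finset.range N, vonMangoldtTerm n y := by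
    filter_upwards [Ioi_mem_nhds (half_lt_self hx)] with y hy
    rw [mem_Ioi] at hy
    exact vonMangoldtSum_eq_sum_range ((half_pos hx).trans hy).le (hN.trans (by gcongr))
  refine ContinuousAt.congr ?_ finite_sum.symm
  exact (continuous_finsetSum _ fun n _ ↦ continuous_vonMangoldtTerm n).continuousAt

theorem integral_pow_mul_vonMangoldtTerm (n k : ℕ) :
    ∫ x in (0 : ℝ)..1, x ^ k * vonMangoldtTerm n x =
      Λ n / (n : ℝ) ^ (k + 2) / ((k + 2) * (k + 3)) := by
  obtain rfl | hn := n.eq_zero_or_pos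
  · simp [vonMangoldtTerm]
  have n_pos : (0 : ℝ) < n := by exact_mod_cast hn
  have inv_le : (n : ℝ)⁻¹ ≤ 1 := inv_le_one_of_one_le₀ (by exact_mod_cast hn)
  have integrable (a b : ℝ) :
      IntervalIntegrable (fun x ↦ x ^ k * vonMangoldtTerm n x) volume a b :=
    ((continuous_pow k).mul (continuous_vonMangoldtTerm n)).intervalIntegrable a b
  have right_part : ∫ x in (n : ℝ)⁻¹..1, x ^ k * vonMangoldtTerm n x = 0 := by
    refine (intervalIntegral.integral_congr fun x hx ↦ ?_).trans intervalIntegral.integral_zero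
    rw [uIcc_of_le inv_le] at hx
    have one_le : 1 ≤ n * x := (inv_le_iff_one_le_mul₀' n_pos).1 hx.1
    simp only [vonMangoldtTerm_of_one_le_mul ((inv_nonneg.2 n_pos.le).trans hx.1) one_le, mul_zero]
  have left_part : ∫ x in (0 : ℝ)..(n : ℝ)⁻¹, x ^ k * vonMangoldtTerm n x =
      ∫ x in (0 : ℝ)..(n : ℝ)⁻¹, Λ n * (x ^ (k + 1) - n * x ^ (k + 2)) := by
    refine intervalIntegral.integral_congr fun x hx ↦ ?_
    rw [uIcc_of_le (inv_nonneg.2 n_pos.le)] at hx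
    have le_one : n * x ≤ 1 := (le_inv_mul_iff₀ n_pos).1 (by simpa using hx.2)
    simp only [vonMangoldtTerm_of_mul_le_one hx.1 le_one]
    ring
  rw [← intervalIntegral.integral_add_adjacent_intervals (integrable 0 _) (integrable _ 1),
    right_part, left_part, add_zero, intervalIntegral.integral_const_mul,
    intervalIntegral.integral_sub (Continuous.intervalIntegrable (by fun_prop) _ _)
      (Continuous.intervalIntegrable (by fun_prop) _ _),
    intervalIntegral.integral_const_mul, integral_pow, integral_pow,
    inv_pow, inv_pow]
  push_cast
  field_simp
  ring

theorem integral_pow_mul_vonMangoldtSum (k : ℕ) :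
    ∫ x in (0 : ℝ)..1, x ^ k * vonMangoldtSum x = vonMangoldtSeries k / ((k + 2) * (k + 3)) := by
  have integral_term (n : ℕ) : ∫ x in Ioc (0 : ℝ) 1, x ^ k * vonMangoldtTerm n x =
      Λ n / (n : ℝ) ^ (k + 2) / ((k + 2) * (k + 3)) := by
    rw [← intervalIntegral.integral_of_le zero_le_one, integral_pow_mul_vonMangoldtTerm]
  have integrable (n : ℕ) :
      Integrable (fun x ↦ x ^ k * vonMangoldtTerm n x) (volume.restrict (Ioc 0 1)) :=
    (((continuous_pow k).mul (continuous_vonMangoldtTerm n)).intervalIntegrable 0 1).1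
  have summable_norm :
      Summable fun n ↦ ∫ x in Ioc (0 : ℝ) 1, ‖x ^ k * vonMangoldtTerm n x‖ := by
    refine ((summable_vonMangoldt_div_pow k).div_const ((k + 2) * (k + 3))).congr fun n ↦ ?_
    rw [← integral_term]
    refine setIntegral_congr_fun measurableSet_Ioc fun x hx ↦ ?_
    exact (Real.norm_of_nonneg
      (mul_nonneg (pow_nonneg hx.1.le k) (vonMangoldtTerm_nonneg n x))).symm
  have := hasSum_integral_of_summable_integral_norm integrable summable_norm
  simp only [integral_term, tsum_mul_left] at this
  rw [intervalIntegral.integral_of_le zero_le_one, vonMangoldtSeries, ← tsum_div_const]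
  exact this.tsum_eq.symm

theorem intervalIntegrable_vonMangoldtSum : IntervalIntegrable vonMangoldtSum volume 0 1 := by
  have integral_eq := integral_pow_mul_vonMangoldtSum 0
  simp only [pow_zero, one_mul, intervalIntegral.integral_of_le zero_le_one] at integral_eq
  rw [intervalIntegrable_iff_integrableOn_Ioc_of_le zero_le_one]
  refine Integrable.of_integral_ne_zero ?_
  rw [integral_eq]
  have : 0 < vonMangoldtSeries 0 := lt_of_lt_of_le (by norm_num) le_vonMangoldtSeries_zero
  positivity

/-- The remainder of `vonMangoldtSum` after its main term `(1 - x) ^ 2 / 2`, corrected by the linear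
term that makes its moments agree with the real parts bounded in
`abs_sum_mul_le_integral_kernelBound`. -/
noncomputable def remainder (x : ℝ) : ℝ :=
  vonMangoldtSum x - ((1 - x) ^ 2 / 2 - gammaLogPi * (x - x ^ 2))

theorem continuousAt_remainder {x : ℝ} (hx : 0 < x) : ContinuousAt remainder x :=
  (continuousAt_vonMangoldtSum hx).sub (Continuous.continuousAt (by fun_prop))

theorem intervalIntegrable_remainder : IntervalIntegrable remainder volume 0 1 :=
  intervalIntegrable_vonMangoldtSum.sub (Continuous.intervalIntegrable (by fun_prop) 0 1)

theorem integral_pow_mul_remainder (k : ℕ) :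
    ∫ x in (0 : ℝ)..1, x ^ k * remainder x =
      (gammaLogPi - 1 / (k + 1) + vonMangoldtSeries k) / ((k + 2) * (k + 3)) := by
  have main_term : ∫ x in (0 : ℝ)..1, x ^ k * ((1 - x) ^ 2 / 2 - gammaLogPi * (x - x ^ 2)) =
      (1 / (k + 1) - gammaLogPi) / ((k + 2) * (k + 3)) := by
    have expand : (fun x : ℝ ↦ x ^ k * ((1 - x) ^ 2 / 2 - gammaLogPi * (x - x ^ 2))) =
        fun x ↦ 1 / 2 * x ^ k - (1 + gammaLogPi) * x ^ (k + 1) +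
          (1 / 2 + gammaLogPi) * x ^ (k + 2) := by
      ext x
      ring
    rw [expand, intervalIntegral.integral_add (Continuous.intervalIntegrable (by fun_prop) _ _)
        (Continuous.intervalIntegrable (by fun_prop) _ _),
      intervalIntegral.integral_sub (Continuous.intervalIntegrable (by fun_prop) _ _)
        (Continuous.intervalIntegrable (by fun_prop) _ _)]
    simp only [intervalIntegral.integral_const_mul, integral_pow]
    push_cast
    field_simp
    ring
  have split : (fun x ↦ x ^ k * remainder x) = fun x ↦ x ^ k * vonMangoldtSum x -
      x ^ k * ((1 - x) ^ 2 / 2 - gammaLogPi * (x - x ^ 2)) := funext fun x ↦ mul_sub ..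
  rw [split, intervalIntegral.integral_sub
      (intervalIntegrable_vonMangoldtSum.continuousOn_mul (continuous_pow k).continuousOn)
      (Continuous.intervalIntegrable (by fun_prop) _ _),
    integral_pow_mul_vonMangoldtSum, main_term]
  ring

theorem abs_integral_eval_mul_remainder_le (hRH : RH) {P : ℝ[X]}
    (hP : ∀ x ∈ Icc 0 1, 0 ≤ P.eval x) :
    |∫ x in (0 : ℝ)..1, P.eval x * remainder x| ≤
      9 / 10 * ∫ x in (0 : ℝ)..1, P.eval x * kernelBound x := by
  have := integral_eval_smul intervalIntegrable_remainder P
  simp only [smul_eq_mul, integral_pow_mul_remainder] at this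
  rw [this]
  exact abs_sum_mul_le_integral_kernelBound hRH hP

theorem abs_remainder_le (hRH : RH) {x : ℝ} (hx : x ∈ Ioc 0 1) :
    |remainder x| ≤ 9 / 10 * kernelBound x := by
  have bound_int : IntervalIntegrable (fun y ↦ 9 / 10 * kernelBound y) volume 0 1 :=
    (continuous_kernelBound.const_mul _).intervalIntegrable 0 1
  have signed (ε : ℝ) (hε : |ε| = 1) : 0 ≤ 9 / 10 * kernelBound x - ε * remainder x := by
    refine nonneg_of_forall_integral_eval_mul_nonneg (x₀ := x) zero_lt_one
      (g := fun y ↦ 9 / 10 * kernelBound y - ε * remainder y)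
      (bound_int.sub (intervalIntegrable_remainder.const_mul ε)) (fun P hP ↦ ?_) ⟨hx.1.le, hx.2⟩
      (((continuous_kernelBound.const_mul _).continuousAt.sub
        ((continuousAt_remainder hx.1).const_mul ε)).continuousWithinAt)
    have integral_eq : ∫ y in (0 : ℝ)..1, P.eval y * (9 / 10 * kernelBound y - ε * remainder y) =
        9 / 10 * (∫ y in (0 : ℝ)..1, P.eval y * kernelBound y) -
          ε * ∫ y in (0 : ℝ)..1, P.eval y * remainder y := by
      simp only [mul_sub, mul_left_comm (P.eval _)]
      rw [intervalIntegral.integral_sub, intervalIntegral.integral_const_mul,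
        intervalIntegral.integral_const_mul]
      · exact ((P.continuous.mul continuous_kernelBound).const_mul _).intervalIntegrable 0 1
      · exact (intervalIntegrable_remainder.continuousOn_mul P.continuous.continuousOn).const_mul ε
    rw [integral_eq, sub_nonneg]
    refine le_trans ?_ (abs_integral_eval_mul_remainder_le hRH hP)
    simpa [abs_mul, hε] using le_abs_self (ε * ∫ y in (0 : ℝ)..1, P.eval y * remainder y)
  rw [abs_le]
  constructor
  · linarith [signed (-1) (by simp)]
  · linarith [signed 1 abs_one]

end Remainder

section Delta

open scoped ArithmeticFunction.vonMangoldt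

theorem log_eta (j : ℕ) : Real.log (eta j) = Λ j := by
  rw [_root_.eta, ArithmeticFunction.vonMangoldt_apply]
  split_ifs <;> simp

theorem eta_pos (j : ℕ) : 0 < eta j := by
  rw [_root_.eta]
  split_ifs
  · exact Nat.minFac_pos j
  · exact one_pos

theorem delta_pos (n : ℕ) : 0 < delta n :=
  Finset.prod_pos fun _ _ ↦ Finset.prod_pos fun j _ ↦ eta_pos j

theorem log_delta_succ (n : ℕ) :
    Real.log (delta (n + 1)) = Real.log (delta n) + ∑ j ∈ Finset.range (n + 1), Λ j := by
  have inner_pos : 0 < ∏ j ∈ Finset.Icc 1 n, eta j := Finset.prod_pos fun j _ ↦ eta_pos j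
  rw [delta, Finset.prod_range_succ, ← delta, Nat.cast_mul,
    Real.log_mul (by exact_mod_cast (delta_pos n).ne') (by exact_mod_cast inner_pos.ne'),
    Nat.cast_prod, Real.log_prod fun j _ ↦ by exact_mod_cast (eta_pos j).ne']
  simp only [log_eta]
  rw [Finset.range_eq_Ico, Finset.sum_eq_sum_Ico_succ_bot n.succ_pos,
    ArithmeticFunction.map_zero, zero_add]
  rfl

theorem log_delta (n : ℕ) :
    Real.log (delta n) = ∑ j ∈ Finset.range n, Λ j * ((n : ℝ) - j) := by
  induction n with
  | zero => simp [delta]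
  | succ n ih =>
    rw [log_delta_succ, ih, Finset.sum_range_succ, Finset.sum_range_succ, ← add_assoc,
      ← Finset.sum_add_distrib]
    push_cast
    congr 1
    · exact Finset.sum_congr rfl fun j _ ↦ by ring
    · ring

theorem sq_mul_vonMangoldtSum_inv {n : ℕ} (hn : 0 < n) :
    (n : ℝ) ^ 2 * vonMangoldtSum (n : ℝ)⁻¹ = Real.log (delta n) := by
  have n_pos : (0 : ℝ) < n := by exact_mod_cast hn
  rw [log_delta, vonMangoldtSum_eq_sum_range (inv_nonneg.2 n_pos.le) (mul_inv_cancel₀ n_pos.ne').ge,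
    Finset.mul_sum]
  refine Finset.sum_congr rfl fun j hj ↦ ?_
  have j_le : (j : ℝ) ≤ n := by exact_mod_cast (Finset.mem_range.1 hj).le
  rw [vonMangoldtTerm_of_mul_le_one (inv_nonneg.2 n_pos.le) (mul_inv_le_one_of_le₀ j_le n_pos.le)]
  field_simp

theorem sq_mul_remainder_inv {n : ℕ} (hn : 0 < n) :
    (n : ℝ) ^ 2 * remainder (n : ℝ)⁻¹ =
      Real.log (delta n) - ((n : ℝ) - 1) ^ 2 / 2 + gammaLogPi * (n - 1) := by
  have : (n : ℝ) ≠ 0 := by exact_mod_cast hn.ne'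
  rw [← sq_mul_vonMangoldtSum_inv hn, remainder]
  field_simp
  ring

theorem sq_mul_kernelBound_inv {y : ℝ} (hy : 0 < y) :
    y ^ 2 * kernelBound y⁻¹ = 2 * y ^ (3 / 2 : ℝ) + 3 * y + 1 := by
  have rpow_eq : y ^ (3 / 2 : ℝ) = y ^ 2 * √y⁻¹ := by
    rw [Real.sqrt_eq_rpow, Real.inv_rpow hy.le, ← Real.rpow_neg hy.le, ← Real.rpow_natCast,
      ← Real.rpow_add hy]
    norm_num
  rw [kernelBound, rpow_eq]
  field_simp

theorem abs_log_delta_sub_le (hRH : RH) {n : ℕ} (hn : 0 < n) :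
    |Real.log (delta n) - ((n : ℝ) - 1) ^ 2 / 2 + gammaLogPi * (n - 1)| ≤
      9 / 10 * (2 * (n : ℝ) ^ (3 / 2 : ℝ) + 3 * n + 1) := by
  have n_pos : (0 : ℝ) < n := by exact_mod_cast hn
  have := abs_remainder_le hRH (x := (n : ℝ)⁻¹)
    ⟨inv_pos.2 n_pos, inv_le_one_of_one_le₀ (by exact_mod_cast hn)⟩
  rw [← sq_mul_remainder_inv hn, ← sq_mul_kernelBound_inv n_pos, abs_mul,
    abs_of_pos (by positivity), mul_left_comm]
  gcongr

theorem sum_one_div_mem_Icc {N : ℕ} (hN : 0 < N) :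
    ∑ k ∈ Finset.Icc 1 N, (1 : ℝ) / k ∈ Icc (Real.log N) (1 + Real.log N) := by
  have sum_eq : ∑ k ∈ Finset.Icc 1 N, (1 : ℝ) / k = harmonic N := by
    rw [harmonic_eq_sum_Icc]
    push_cast
    simp only [one_div]
  rw [sum_eq]
  refine ⟨(Real.log_le_log (by exact_mod_cast hN) ?_).trans (log_add_one_le_harmonic N),
    harmonic_le_one_add_log N⟩
  exact_mod_cast N.le_succ

theorem abs_harmonic_delta_sub_lt (hRH : RH) {n : ℕ} (hn : 0 < n) :
    |∑ k ∈ Finset.Icc 1 (delta n), (1 : ℝ) / k - (n : ℝ) ^ 2 / 2| <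
      5 * (n : ℝ) ^ (3 / 2 : ℝ) + 1 := by
  have one_le : (1 : ℝ) ≤ n := by exact_mod_cast hn
  have tangent : 1 + 3 / 2 * ((n : ℝ) - 1) ≤ (n : ℝ) ^ (3 / 2 : ℝ) := by
    have := one_add_mul_self_le_rpow_one_add (s := (n : ℝ) - 1) (p := 3 / 2) (by linarith)
      (by norm_num)
    rwa [add_sub_cancel] at this
  have linear_nonneg : 0 ≤ gammaLogPi * (n - 1) :=
    mul_nonneg (by linarith [le_gammaLogPi]) (by linarith)
  have linear_le : gammaLogPi * (n - 1) ≤ 11 / 10 * (n - 1) :=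
    mul_le_mul_of_nonneg_right gammaLogPi_le (by linarith)
  obtain ⟨log_le, le_log⟩ := sum_one_div_mem_Icc (delta_pos n)
  obtain ⟨lower, upper⟩ := abs_le.1 (abs_log_delta_sub_le hRH hn)
  rw [abs_lt]
  constructor <;> nlinarith

end Delta

theorem rh_implies_harmonic_bound' (hRH : RH) :
    ∀ n : ℕ, 0 < n →
      ((∑ k ∈ Finset.Icc 1 (delta n), (1 : ℝ) / k) - (n : ℝ) ^ 2 / 2) ^ 2
        < 25 * (n : ℝ) ^ 3 + 10 * (n : ℝ) ^ ((3 : ℝ) / 2) + 1 := by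
  intro n hn
  have sq_rpow : ((n : ℝ) ^ (3 / 2 : ℝ)) ^ 2 = n ^ 3 := by
    rw [← Real.rpow_mul_natCast n.cast_nonneg, ← Real.rpow_natCast]
    norm_num
  calc
    _ < (5 * (n : ℝ) ^ (3 / 2 : ℝ) + 1) ^ 2 :=
      sq_lt_sq.2 ((abs_harmonic_delta_sub_lt hRH hn).trans_le (le_abs_self _))
    _ = _ := by
      rw [← sq_rpow]
      ring
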